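/- arXiv:2312.06508 — 4 statements merged into one kernel-verified Lean document; each statement's English description precedes it below -/
import Mathlib

section
/- Suppose each f_i : ℝ^d → ℝ is convex and differentiable and each h_i : ℝ^d → ℝ ∪ {+∞} is proper, closed, and convex; set F(x) = Σ_{i=1}^n (f_i(x_i) + h_i(x_i)) for x = (x_1,…,x_n) ∈ (ℝ^d)^n. Assume F is bounded below, the consensus problem min_{z∈ℝ^d} Σ_i (f_i(z) + h_i(z)) has an optimal solution with optimal value F_opt, and let W be symmetric, entrywise nonnegative, stochastic with β ∈ [0,1) satisfying ‖Wv‖ ≤ β‖v‖ for all v ⟂ 𝟙. If α > 0 and x* = (x*_1,…,x*_n) minimizes x ↦ F(x) + (1/(2α))⟨x, (I − 𝐖)x⟩ over (ℝ^d)^n, then F(x*) ≤ F_opt and, for every i, ‖x*_i − x̄*‖ ≤ sqrt( 2α(F_opt − inf F) / (1 − β) ), where x̄* = (1/n)Σ_i x*_i. -/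
open scoped RealInnerProductSpace

/-- A function `h : ℝ^d → ℝ ∪ {+∞}` (modeled as `EReal`-valued, never `⊥`) is proper,
closed (lower semicontinuous), and convex. -/
def ProperClosedConvex {d : ℕ} (h : EuclideanSpace ℝ (Fin d) → EReal) : Prop :=
  (∃ x, h x ≠ ⊤) ∧ (∀ x, h x ≠ ⊥) ∧ LowerSemicontinuous h ∧
    ∀ x y : EuclideanSpace ℝ (Fin d), ∀ t : ℝ, 0 ≤ t → t ≤ 1 →
      h (t • x + (1 - t) • y) ≤ (t : EReal) * h x + ((1 - t : ℝ) : EReal) * h y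

/-!
The penalty `⟨x, (I - 𝐖)x⟩` vanishes on consensus vectors, so comparing the minimizer `x⋆` of the
penalized problem with the consensus optimum gives `F(x⋆) + (1/(2α))⟨x⋆, (I - 𝐖)x⋆⟩ ≤ Fopt`.
As the penalty is nonnegative, `F(x⋆) ≤ Fopt`; as `F(x⋆) ≥ inf F`, the form `⟨x⋆, (I - 𝐖)x⋆⟩` is at
most `2α(Fopt - inf F)`. The form is unchanged when the same vector is subtracted from every block,
so the spectral gap, applied to the centred vector, bounds it below by `(1 - β) ∑ᵢ ‖x⋆ᵢ - x̄⋆‖²`.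
-/

lemma sum_sub_mean_eq_zero {ι E : Type*} [Fintype ι] [AddCommGroup E] [Module ℝ E] (x : ι → E) :
    ∑ i, (x i - (Fintype.card ι : ℝ)⁻¹ • ∑ j, x j) = 0 := by
  cases isEmpty_or_nonempty ι
  · exact Fintype.sum_empty _
  · have hcard : (Fintype.card ι : ℝ) ≠ 0 := Nat.cast_ne_zero.mpr Fintype.card_ne_zero
    rw [Finset.sum_sub_distrib, Finset.sum_const, Finset.card_univ, ← Nat.cast_smul_eq_nsmul ℝ,
      smul_inv_smul₀ hcard, sub_self]

lemma sum_mul_sum_le_of_sqrt_le {ι : Type*} [Fintype ι] {W : ι → ι → ℝ} {β : ℝ} {v : ι → ℝ}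
    (hv : √(∑ i, (∑ j, W i j * v j) ^ 2) ≤ β * √(∑ i, v i ^ 2)) :
    ∑ i, v i * ∑ j, W i j * v j ≤ β * ∑ i, v i ^ 2 :=
  calc ∑ i, v i * ∑ j, W i j * v j
      ≤ √(∑ i, v i ^ 2) * √(∑ i, (∑ j, W i j * v j) ^ 2) :=
        Real.sum_mul_le_sqrt_mul_sqrt _ _ _
    _ ≤ √(∑ i, v i ^ 2) * (β * √(∑ i, v i ^ 2)) := by gcongr
    _ = β * (√(∑ i, v i ^ 2) * √(∑ i, v i ^ 2)) := by ring
    _ = β * ∑ i, v i ^ 2 := by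
        rw [Real.mul_self_sqrt (Finset.sum_nonneg fun i _ => sq_nonneg (v i))]

lemma le_sub_of_coe_le_of_add_coe_le {a : EReal} {lower upper p : ℝ}
    (hlower : (lower : EReal) ≤ a) (hupper : a + p ≤ upper) : p ≤ upper - lower := by
  have hsum : ((lower + p : ℝ) : EReal) ≤ upper := by
    rw [EReal.coe_add]
    exact (add_le_add_left hlower _).trans hupper
  exact le_sub_iff_add_le'.mpr (EReal.coe_le_coe_iff.mp hsum)

section LaplacianForm

variable {ι E : Type*} [NormedAddCommGroup E] [InnerProductSpace ℝ E]

lemma exists_inner_eq_sum_inner_mul_inner [Finite ι] (x : ι → E) :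
    ∃ (m : ℕ) (b : Fin m → E), ∀ i j, ⟪x i, x j⟫ = ∑ k, ⟪b k, x i⟫ * ⟪b k, x j⟫ := by
  have : FiniteDimensional ℝ (Submodule.span ℝ (Set.range x)) :=
    .span_of_finite ℝ (Set.finite_range x)
  let b := stdOrthonormalBasis ℝ (Submodule.span ℝ (Set.range x))
  let y : ι → Submodule.span ℝ (Set.range x) := fun i => ⟨x i, Submodule.subset_span ⟨i, rfl⟩⟩
  refine ⟨_, fun k => b k, fun i j => ?_⟩
  calc ⟪x i, x j⟫ = ∑ k, ⟪y i, b k⟫ * ⟪b k, y j⟫ := (b.sum_inner_mul_inner (y i) (y j)).symm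
    _ = ∑ k, ⟪(b k : E), x i⟫ * ⟪(b k : E), x j⟫ :=
      Finset.sum_congr rfl fun k _ => by rw [real_inner_comm]; rfl

variable [Fintype ι]

/-- The quadratic form `⟨x, (I - 𝐖)x⟩` of the graph Laplacian `I - W`, acting blockwise on families
of vectors: the penalty that measures how far `x` is from consensus. The blockwise action of
`𝐖 = W ⊗ I` is written out as a sum, so that `E` may be any real inner product space. -/
def laplacianForm (W : ι → ι → ℝ) (x : ι → E) : ℝ :=
  ∑ i, ⟪x i, x i - ∑ j, W i j • x j⟫

lemma laplacianForm_eq_sum_norm_sq_sub (W : ι → ι → ℝ) (x : ι → E) :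
    laplacianForm W x = ∑ i, ‖x i‖ ^ 2 - ∑ i, ∑ j, W i j * ⟪x i, x j⟫ := by
  simp only [laplacianForm, inner_sub_right, inner_sum, real_inner_smul_right,
    real_inner_self_eq_norm_sq, Finset.sum_sub_distrib]

variable {W : ι → ι → ℝ}

lemma laplacianForm_const (hrow : ∀ i, ∑ j, W i j = 1) (z : E) :
    laplacianForm W (fun _ => z) = 0 := by
  simp [laplacianForm, ← Finset.sum_smul, hrow]

lemma laplacianForm_sub_const (hrow : ∀ i, ∑ j, W i j = 1) (hcol : ∀ j, ∑ i, W i j = 1)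
    (x : ι → E) (c : E) :
    laplacianForm W (fun i => x i - c) = laplacianForm W x := by
  have hresidual (i : ι) : x i - c - ∑ j, W i j • (x j - c) = x i - ∑ j, W i j • x j := by
    simp only [smul_sub, Finset.sum_sub_distrib, ← Finset.sum_smul, hrow, one_smul]
    abel
  have hresidual_sum : ∑ i, (x i - ∑ j, W i j • x j) = 0 := by
    rw [Finset.sum_sub_distrib, Finset.sum_comm]
    simp only [← Finset.sum_smul, hcol, one_smul, sub_self]
  simp only [laplacianForm, hresidual]
  simp only [inner_sub_left (x _) c, Finset.sum_sub_distrib, ← inner_sum, hresidual_sum,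
    inner_zero_right, sub_zero]

-- Coordinates of a mean-zero family in an orthonormal basis are mean-zero real families, so the
-- bound for real families applies to each coordinate.
lemma sum_sum_mul_inner_le_mul_sum_norm_sq {β : ℝ}
    (hW : ∀ v : ι → ℝ, ∑ i, v i = 0 → ∑ i, v i * ∑ j, W i j * v j ≤ β * ∑ i, v i ^ 2)
    {y : ι → E} (hy : ∑ i, y i = 0) :
    ∑ i, ∑ j, W i j * ⟪y i, y j⟫ ≤ β * ∑ i, ‖y i‖ ^ 2 := by
  obtain ⟨m, b, hb⟩ := exists_inner_eq_sum_inner_mul_inner y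
  have hcoord (k : Fin m) : ∑ i, ⟪b k, y i⟫ = 0 := by
    rw [← inner_sum, hy, inner_zero_right]
  calc ∑ i, ∑ j, W i j * ⟪y i, y j⟫
      = ∑ i, ∑ k, ⟪b k, y i⟫ * ∑ j, W i j * ⟪b k, y j⟫ := by
        refine Finset.sum_congr rfl fun i _ => ?_
        simp only [hb, Finset.mul_sum]
        rw [Finset.sum_comm]
        simp only [mul_left_comm]
    _ = ∑ k, ∑ i, ⟪b k, y i⟫ * ∑ j, W i j * ⟪b k, y j⟫ := Finset.sum_comm
    _ ≤ ∑ k, β * ∑ i, ⟪b k, y i⟫ ^ 2 := Finset.sum_le_sum fun k _ => hW _ (hcoord k)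
    _ = β * ∑ i, ‖y i‖ ^ 2 := by
        simp only [← Finset.mul_sum, ← real_inner_self_eq_norm_sq, hb, ← sq]
        rw [Finset.sum_comm]

lemma mul_sum_norm_sub_mean_sq_le_laplacianForm
    (hrow : ∀ i, ∑ j, W i j = 1) (hcol : ∀ j, ∑ i, W i j = 1) {β : ℝ}
    (hW : ∀ v : ι → ℝ, ∑ i, v i = 0 → ∑ i, v i * ∑ j, W i j * v j ≤ β * ∑ i, v i ^ 2)
    (x : ι → E) :
    (1 - β) * ∑ i, ‖x i - (Fintype.card ι : ℝ)⁻¹ • ∑ j, x j‖ ^ 2 ≤ laplacianForm W x := by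
  rw [← laplacianForm_sub_const hrow hcol x ((Fintype.card ι : ℝ)⁻¹ • ∑ j, x j),
    laplacianForm_eq_sum_norm_sq_sub, sub_mul, one_mul]
  exact sub_le_sub_left (sum_sum_mul_inner_le_mul_sum_norm_sq hW (sum_sub_mean_eq_zero x)) _

lemma laplacianForm_nonneg
    (hrow : ∀ i, ∑ j, W i j = 1) (hcol : ∀ j, ∑ i, W i j = 1) {β : ℝ} (hβ : β ≤ 1)
    (hW : ∀ v : ι → ℝ, ∑ i, v i = 0 → ∑ i, v i * ∑ j, W i j * v j ≤ β * ∑ i, v i ^ 2)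
    (x : ι → E) : 0 ≤ laplacianForm W x :=
  (mul_nonneg (sub_nonneg.mpr hβ) (Finset.sum_nonneg fun _ _ => sq_nonneg _)).trans
    (mul_sum_norm_sub_mean_sq_le_laplacianForm hrow hcol hW x)

lemma norm_sub_mean_le_sqrt_laplacianForm_div
    (hrow : ∀ i, ∑ j, W i j = 1) (hcol : ∀ j, ∑ i, W i j = 1) {β : ℝ} (hβ : β < 1)
    (hW : ∀ v : ι → ℝ, ∑ i, v i = 0 → ∑ i, v i * ∑ j, W i j * v j ≤ β * ∑ i, v i ^ 2)
    (x : ι → E) (i : ι) :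
    ‖x i - (Fintype.card ι : ℝ)⁻¹ • ∑ j, x j‖ ≤ √(laplacianForm W x / (1 - β)) := by
  refine Real.le_sqrt_of_sq_le ((le_div_iff₀' (sub_pos.mpr hβ)).mpr ?_)
  calc (1 - β) * ‖x i - (Fintype.card ι : ℝ)⁻¹ • ∑ j, x j‖ ^ 2
      ≤ (1 - β) * ∑ k, ‖x k - (Fintype.card ι : ℝ)⁻¹ • ∑ j, x j‖ ^ 2 :=
        mul_le_mul_of_nonneg_left (Finset.single_le_sum
          (f := fun k => ‖x k - (Fintype.card ι : ℝ)⁻¹ • ∑ j, x j‖ ^ 2)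
          (fun _ _ => sq_nonneg _) (Finset.mem_univ i)) (sub_nonneg.mpr hβ.le)
    _ ≤ laplacianForm W x := mul_sum_norm_sub_mean_sq_le_laplacianForm hrow hcol hW x

theorem stmt3_general (F : (ι → E) → EReal)
    (hrow : ∀ i, ∑ j, W i j = 1) (hcol : ∀ j, ∑ i, W i j = 1) {β : ℝ} (hβ : β < 1)
    (hW : ∀ v : ι → ℝ, ∑ i, v i = 0 → ∑ i, v i * ∑ j, W i j * v j ≤ β * ∑ i, v i ^ 2)
    {α : ℝ} (hα : 0 < α) {Finf : ℝ} (hFinf : ∀ y, (Finf : EReal) ≤ F y)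
    {z : E} {Fopt : ℝ} (hFopt : F (fun _ => z) = Fopt) {x : ι → E}
    (hx : ∀ y, F x + ((1 / (2 * α) * laplacianForm W x : ℝ) : EReal)
      ≤ F y + ((1 / (2 * α) * laplacianForm W y : ℝ) : EReal)) :
    F x ≤ Fopt ∧ ∀ i, ‖x i - (Fintype.card ι : ℝ)⁻¹ • ∑ j, x j‖
      ≤ √(2 * α * (Fopt - Finf) / (1 - β)) := by
  have hpenalty_nonneg : 0 ≤ 1 / (2 * α) * laplacianForm W x :=
    mul_nonneg (by positivity) (laplacianForm_nonneg hrow hcol hβ.le hW x)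
  have hpenalized_le : F x + ((1 / (2 * α) * laplacianForm W x : ℝ) : EReal) ≤ Fopt := by
    simpa only [laplacianForm_const hrow, mul_zero, EReal.coe_zero, add_zero, hFopt]
      using hx fun _ => z
  have hform_le : laplacianForm W x ≤ 2 * α * (Fopt - Finf) := by
    have hpenalty_le := le_sub_of_coe_le_of_add_coe_le (hFinf x) hpenalized_le
    rwa [one_div, inv_mul_le_iff₀ (by positivity)] at hpenalty_le
  refine ⟨(le_add_of_nonneg_right (EReal.coe_nonneg.mpr hpenalty_nonneg)).trans hpenalized_le,
    fun i => (norm_sub_mean_le_sqrt_laplacianForm_div hrow hcol hβ hW x i).trans ?_⟩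
  exact Real.sqrt_le_sqrt (div_le_div_of_nonneg_right hform_le (sub_nonneg.mpr hβ.le))

end LaplacianForm

/-- **Lemma 1 of the paper.** Under convexity of the `fᵢ`, proper closed
convex `hᵢ`, boundedness below of `F` (with finite infimum `Finf`), existence of a
consensus optimum with value `Fopt`, and the spectral hypothesis on `W`, any minimizer
`x⋆` of the penalized problem `F(x) + (1/(2α))⟨x,(I−𝐖)x⟩` satisfies `F(x⋆) ≤ Fopt` and
`‖x⋆ᵢ − x̄⋆‖ ≤ √(2α(Fopt − inf F)/(1 − β))` for every `i`. -/
theorem stmt3 (n d : ℕ) (hn : 0 < n)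
    (f : Fin n → EuclideanSpace ℝ (Fin d) → ℝ)
    (hfconv : ∀ i, ConvexOn ℝ Set.univ (f i))
    (hfdiff : ∀ i, Differentiable ℝ (f i))
    (h : Fin n → EuclideanSpace ℝ (Fin d) → EReal)
    (hh : ∀ i, ProperClosedConvex (h i))
    (W : Fin n → Fin n → ℝ)
    (hWsymm : ∀ i j, W i j = W j i)
    (hWnonneg : ∀ i j, 0 ≤ W i j)
    (hWstoch : ∀ i, ∑ j, W i j = 1)
    (β : ℝ) (hβ0 : 0 ≤ β) (hβ1 : β < 1)
    (hWspec : ∀ v : Fin n → ℝ, (∑ i, v i) = 0 →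
      Real.sqrt (∑ i, (∑ j, W i j * v j) ^ 2) ≤ β * Real.sqrt (∑ i, v i ^ 2))
    (α : ℝ) (hα : 0 < α)
    -- `F` is bounded below, with finite infimum `Finf`
    (Finf : ℝ)
    (hFinf : IsGLB (Set.range fun x : Fin n → EuclideanSpace ℝ (Fin d) =>
      ∑ i, (((f i (x i) : ℝ) : EReal) + h i (x i))) ((Finf : ℝ) : EReal))
    -- the consensus problem has an optimal solution, with (finite) optimal value `Fopt`
    (zstar : EuclideanSpace ℝ (Fin d)) (Fopt : ℝ)
    (hzopt : ∀ z : EuclideanSpace ℝ (Fin d),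
      (∑ i, (((f i zstar : ℝ) : EReal) + h i zstar))
        ≤ ∑ i, (((f i z : ℝ) : EReal) + h i z))
    (hFopt : (∑ i, (((f i zstar : ℝ) : EReal) + h i zstar)) = ((Fopt : ℝ) : EReal))
    -- `x⋆` minimizes the penalized problem
    (xstar : Fin n → EuclideanSpace ℝ (Fin d))
    (hxstar : ∀ x : Fin n → EuclideanSpace ℝ (Fin d),
      (∑ i, (((f i (xstar i) : ℝ) : EReal) + h i (xstar i)))
          + ((1 / (2 * α) * ∑ i, ⟪xstar i, xstar i - (∑ j, W i j • xstar j)⟫ : ℝ) : EReal)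
        ≤ (∑ i, (((f i (x i) : ℝ) : EReal) + h i (x i)))
          + ((1 / (2 * α) * ∑ i, ⟪x i, x i - (∑ j, W i j • x j)⟫ : ℝ) : EReal)) :
    (∑ i, (((f i (xstar i) : ℝ) : EReal) + h i (xstar i))) ≤ ((Fopt : ℝ) : EReal) ∧
    ∀ i, ‖xstar i - (n : ℝ)⁻¹ • ∑ j, xstar j‖
      ≤ Real.sqrt (2 * α * (Fopt - Finf) / (1 - β)) := by
  have hWcol (j : Fin n) : ∑ i, W i j = 1 :=
    (Finset.sum_congr rfl fun i _ => hWsymm i j).trans (hWstoch j)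
  simpa only [Fintype.card_fin] using
    stmt3_general (fun x => ∑ i, ((f i (x i) : EReal) + h i (x i))) hWstoch hWcol hβ1
      (fun v hv => sum_mul_sum_le_of_sqrt_le (hWspec v hv)) hα
      (fun x => hFinf.1 ⟨x, rfl⟩) hFopt hxstar
end

section
/- Suppose each f_i : ℝ^d → ℝ is convex and differentiable, the h_i are all equal to a single proper, closed, convex function h : ℝ^d → ℝ ∪ {+∞}, W is symmetric, entrywise nonnegative, stochastic with ‖Wv‖ ≤ β‖v‖ for all v ⟂ 𝟙 and β ∈ [0,1), and α > 0. If x* = (x*_1,…,x*_n) is a fixed point of synchronous Prox-DGD, i.e., for each i, x*_i is the unique minimizer of y ↦ αh(y) + (1/2)‖y − (Σ_j w_{ij}x*_j − α∇f_i(x*_i))‖², then ‖x* − 𝐱̄*‖ ≤ (α/(1 − β))·‖g*‖, where g* = (∇f_1(x*_1),…,∇f_n(x*_n)) ∈ (ℝ^d)^n, x̄* = (1/n)Σ_i x*_i, and 𝐱̄* = (x̄*,…,x̄*). -/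
open scoped RealInnerProductSpace

/-- `IsProxPt α h u p` says `p` minimizes `y ↦ α·h(y) + ½‖y − u‖²`, i.e.
`p = prox_{αh}(u)`. -/
def IsProxPt {d : ℕ} (α : ℝ) (h : EuclideanSpace ℝ (Fin d) → EReal)
    (u p : EuclideanSpace ℝ (Fin d)) : Prop :=
  ∀ y, (α : EReal) * h p + ((1 / 2 * ‖p - u‖ ^ 2 : ℝ) : EReal)
      ≤ (α : EReal) * h y + ((1 / 2 * ‖y - u‖ ^ 2 : ℝ) : EReal)

/-!
The proximal map is firmly nonexpansive: `‖p - q‖² ≤ ⟪p - q, u - v⟫` whenever `p = prox u` and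
`q = prox v`. Applying this to all pairs of agents and summing, the deviation `v` of the fixed
point from its mean satisfies `‖v‖² ≤ ⟪v, Wv - αg⟫` in the product space, because for `∑ vᵢ = 0`
one has `∑ᵢⱼ ⟪vᵢ - vⱼ, uᵢ - uⱼ⟫ = 2n ∑ᵢ ⟪vᵢ, uᵢ⟫`. With `‖Wv‖ ≤ β‖v‖`, Cauchy–Schwarz gives
`(1 - β)‖v‖ ≤ α‖g‖`. Comparing the agents pairwise takes the place of comparing each of them with
the proximal point of the mean.
-/

/-- Proximal point of a real-valued `φ` whose effective domain is `s`: `p` minimizes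
`y ↦ φ y + ½‖y − u‖²` over `s`. An extended-valued function is encoded by its domain and its
finite values there. -/
def IsProxOn {E : Type*} [NormedAddCommGroup E] (s : Set E) (φ : E → ℝ) (u p : E) : Prop :=
  p ∈ s ∧ IsMinOn (fun y ↦ φ y + 1 / 2 * ‖y - u‖ ^ 2) s p

/-- The deviation of the family `x` from its mean: the component of `x` orthogonal to the
consensus set `{x | x₁ = … = xₙ}`. -/
noncomputable def deviation {ι E : Type*} [Fintype ι] [AddCommGroup E] [Module ℝ E]
    (x : ι → E) (i : ι) : E :=
  x i - (Fintype.card ι : ℝ)⁻¹ • ∑ j, x j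

section Prox

open Filter Topology

variable {E : Type*} [NormedAddCommGroup E] [InnerProductSpace ℝ E] {s : Set E} {φ : E → ℝ}

lemma IsProxOn.sub_le_inner_add_mul {u p q : E} (hφ : ConvexOn ℝ s φ) (hp : IsProxOn s φ u p)
    (hq : q ∈ s) {t : ℝ} (ht₀ : 0 < t) (ht₁ : t ≤ 1) :
    φ p - φ q ≤ ⟪p - u, q - p⟫ + t * (1 / 2 * ‖q - p‖ ^ 2) := by
  have hmem : (1 - t) • p + t • q ∈ s :=
    hφ.1 hp.1 hq (sub_nonneg.2 ht₁) ht₀.le (sub_add_cancel 1 t)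
  have hconv : φ ((1 - t) • p + t • q) ≤ (1 - t) * φ p + t * φ q :=
    hφ.2 hp.1 hq (sub_nonneg.2 ht₁) ht₀.le (sub_add_cancel 1 t)
  have hmin : φ p + 1 / 2 * ‖p - u‖ ^ 2 ≤
      φ ((1 - t) • p + t • q) + 1 / 2 * ‖(1 - t) • p + t • q - u‖ ^ 2 :=
    hp.2 hmem
  have hexpand : ‖(1 - t) • p + t • q - u‖ ^ 2 =
      ‖p - u‖ ^ 2 + 2 * (t * ⟪p - u, q - p⟫) + (t * ‖q - p‖) ^ 2 := by
    rw [show (1 - t) • p + t • q - u = (p - u) + t • (q - p) by module, norm_add_sq_real,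
      inner_smul_right, norm_smul, Real.norm_of_nonneg ht₀.le]
  refine le_of_mul_le_mul_left ?_ ht₀
  linarith

lemma IsProxOn.sub_le_inner {u p q : E} (hφ : ConvexOn ℝ s φ) (hp : IsProxOn s φ u p)
    (hq : q ∈ s) : φ p - φ q ≤ ⟪p - u, q - p⟫ := by
  have hlim : Tendsto (fun t : ℝ ↦ ⟪p - u, q - p⟫ + t * (1 / 2 * ‖q - p‖ ^ 2)) (𝓝[>] 0)
      (𝓝 ⟪p - u, q - p⟫) :=
    tendsto_nhdsWithin_of_tendsto_nhds <| Continuous.tendsto' (by fun_prop) _ _ (by simp)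
  refine ge_of_tendsto hlim ?_
  filter_upwards [Ioc_mem_nhdsGT zero_lt_one] with t ht
  exact hp.sub_le_inner_add_mul hφ hq ht.1 ht.2

lemma IsProxOn.norm_sub_sq_le_inner {u v p q : E} (hφ : ConvexOn ℝ s φ)
    (hp : IsProxOn s φ u p) (hq : IsProxOn s φ v q) : ‖p - q‖ ^ 2 ≤ ⟪p - q, u - v⟫ := by
  have hsum : ⟪p - u, q - p⟫ + ⟪q - v, p - q⟫ = ⟪p - q, u - v⟫ - ‖p - q‖ ^ 2 := by
    rw [← neg_sub p q, inner_neg_right, neg_add_eq_sub, ← inner_sub_left,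
      ← real_inner_self_eq_norm_sq, ← inner_sub_right, real_inner_comm]
    congr 1
    abel
  linarith [hp.sub_le_inner hφ hq.1, hq.sub_le_inner hφ hp.1]

end Prox

section ExtendedValued

variable {d : ℕ} {h : EuclideanSpace ℝ (Fin d) → EReal}

lemma ProperClosedConvex.convexOn_toReal (hh : ProperClosedConvex h) :
    ConvexOn ℝ {x | h x ≠ ⊤} fun x ↦ (h x).toReal := by
  obtain ⟨-, hbot, -, hconv⟩ := hh
  have hle : ∀ x, h x ≠ ⊤ → ∀ y, h y ≠ ⊤ → ∀ a b : ℝ, 0 ≤ a → 0 ≤ b → a + b = 1 →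
      h (a • x + b • y) ≤ ((a * (h x).toReal + b * (h y).toReal : ℝ) : EReal) := by
    intro x hx y hy a b ha hb hab
    obtain rfl : b = 1 - a := by linarith
    simpa only [EReal.coe_add, EReal.coe_mul, EReal.coe_toReal hx (hbot x),
      EReal.coe_toReal hy (hbot y)] using hconv x y a ha (by linarith)
  refine ⟨fun x hx y hy a b ha hb hab ↦ ?_, fun x hx y hy a b ha hb hab ↦ ?_⟩
  · exact ((hle x hx y hy a b ha hb hab).trans_lt (EReal.coe_lt_top _)).ne
  · exact EReal.toReal_le_toReal (hle x hx y hy a b ha hb hab) (hbot _) (EReal.coe_ne_top _)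

lemma IsProxPt.isProxOn_toReal {α : ℝ} {u p : EuclideanSpace ℝ (Fin d)} (hp : IsProxPt α h u p)
    (hh : ProperClosedConvex h) (hα : 0 < α) :
    IsProxOn {x | h x ≠ ⊤} (fun x ↦ α * (h x).toReal) u p := by
  obtain ⟨⟨z, hz⟩, hbot, -, -⟩ := hh
  have hcoe : ∀ y, h y ≠ ⊤ → (α : EReal) * h y + ((1 / 2 * ‖y - u‖ ^ 2 : ℝ) : EReal) =
      ((α * (h y).toReal + 1 / 2 * ‖y - u‖ ^ 2 : ℝ) : EReal) := fun y hy ↦ by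
    rw [EReal.coe_add, EReal.coe_mul α, EReal.coe_toReal hy (hbot y)]
  have hdom : h p ≠ ⊤ := fun htop ↦ by
    have hle := hp z
    rw [hcoe z hz, htop, EReal.coe_mul_top_of_pos hα, EReal.top_add_coe, top_le_iff] at hle
    exact EReal.coe_ne_top _ hle
  refine ⟨hdom, fun y hy ↦ ?_⟩
  have hle := hp y
  rwa [hcoe p hdom, hcoe y hy, EReal.coe_le_coe_iff] at hle

end ExtendedValued

section Deviation

variable {ι E : Type*} [Fintype ι] [AddCommGroup E] [Module ℝ E]

lemma sum_deviation (x : ι → E) : ∑ i, deviation x i = 0 := by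
  cases isEmpty_or_nonempty ι
  · exact Fintype.sum_empty _
  · simp only [deviation, Finset.sum_sub_distrib, Finset.sum_const, Finset.card_univ]
    rw [← Nat.cast_smul_eq_nsmul ℝ, smul_inv_smul₀ (by positivity), sub_self]

lemma deviation_sub_deviation (x : ι → E) (i j : ι) :
    deviation x i - deviation x j = x i - x j :=
  sub_sub_sub_cancel_right _ _ _

lemma sum_smul_deviation {w : ι → ℝ} (hw : ∑ j, w j = 1) (x : ι → E) :
    ∑ j, w j • deviation x j = ∑ j, w j • x j - (Fintype.card ι : ℝ)⁻¹ • ∑ j, x j := by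
  simp only [deviation, smul_sub, Finset.sum_sub_distrib, ← Finset.sum_smul, hw, one_smul]

end Deviation

section InnerProduct

variable {ι κ E : Type*} [Fintype ι] [Fintype κ] [NormedAddCommGroup E] [InnerProductSpace ℝ E]

lemma sum_sum_inner_sub_sub {v : ι → E} (hv : ∑ i, v i = 0) (u : ι → E) :
    ∑ i, ∑ j, ⟪v i - v j, u i - u j⟫ = 2 * Fintype.card ι * ∑ i, ⟪v i, u i⟫ := by
  have hcross : ∑ i, ∑ j, ⟪v j, u i⟫ = 0 := by
    simp only [← sum_inner, hv, inner_zero_left, Finset.sum_const_zero]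
  have hcross' : ∑ i, ∑ j, ⟪v i, u j⟫ = 0 := by rw [Finset.sum_comm, hcross]
  simp only [inner_sub_left, inner_sub_right, Finset.sum_sub_distrib, hcross, hcross',
    Finset.sum_const, Finset.card_univ, nsmul_eq_mul, ← Finset.mul_sum]
  ring

lemma sum_norm_sq_le_sum_inner {v u : ι → E} (hv : ∑ i, v i = 0)
    (hvu : ∀ i j, ‖v i - v j‖ ^ 2 ≤ ⟪v i - v j, u i - u j⟫) :
    ∑ i, ‖v i‖ ^ 2 ≤ ∑ i, ⟪v i, u i⟫ := by
  cases isEmpty_or_nonempty ι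
  · simp
  have hpairs : ∑ i, ∑ j, ⟪v i - v j, v i - v j⟫ ≤ ∑ i, ∑ j, ⟪v i - v j, u i - u j⟫ := by
    gcongr with i _ j _
    exact (real_inner_self_eq_norm_sq _).trans_le (hvu i j)
  rw [sum_sum_inner_sub_sub hv, sum_sum_inner_sub_sub hv] at hpairs
  simpa only [real_inner_self_eq_norm_sq] using le_of_mul_le_mul_left hpairs (by positivity)

lemma sum_norm_sq_sum_smul_le_of_finiteDimensional [FiniteDimensional ℝ E] {W : κ → ι → ℝ}
    {c : ℝ} (hW : ∀ a : ι → ℝ, ∑ j, a j = 0 → ∑ i, (∑ j, W i j * a j) ^ 2 ≤ c * ∑ j, a j ^ 2)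
    {v : ι → E} (hv : ∑ j, v j = 0) :
    ∑ i, ‖∑ j, W i j • v j‖ ^ 2 ≤ c * ∑ j, ‖v j‖ ^ 2 := by
  let b := stdOrthonormalBasis ℝ E
  have hcoord : ∀ k, ∑ i, ⟪b k, ∑ j, W i j • v j⟫ ^ 2 ≤ c * ∑ j, ⟪b k, v j⟫ ^ 2 := fun k ↦ by
    simpa only [inner_sum, inner_smul_right] using
      hW (fun j ↦ ⟪b k, v j⟫) (by rw [← inner_sum, hv, inner_zero_right])
  have hnorm : ∀ y : E, ‖y‖ ^ 2 = ∑ k, ⟪b k, y⟫ ^ 2 := fun y ↦ by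
    simpa only [Real.norm_eq_abs, sq_abs] using (b.sum_sq_norm_inner_right y).symm
  calc ∑ i, ‖∑ j, W i j • v j‖ ^ 2 = ∑ k, ∑ i, ⟪b k, ∑ j, W i j • v j⟫ ^ 2 := by
        simp only [hnorm]; exact Finset.sum_comm
    _ ≤ ∑ k, c * ∑ j, ⟪b k, v j⟫ ^ 2 := Finset.sum_le_sum fun k _ ↦ hcoord k
    _ = c * ∑ j, ‖v j‖ ^ 2 := by
        rw [← Finset.mul_sum, Finset.sum_comm]; simp only [hnorm]

lemma sum_norm_sq_sum_smul_le {W : κ → ι → ℝ} {c : ℝ}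
    (hW : ∀ a : ι → ℝ, ∑ j, a j = 0 → ∑ i, (∑ j, W i j * a j) ^ 2 ≤ c * ∑ j, a j ^ 2)
    {v : ι → E} (hv : ∑ j, v j = 0) :
    ∑ i, ‖∑ j, W i j • v j‖ ^ 2 ≤ c * ∑ j, ‖v j‖ ^ 2 := by
  let S := Submodule.span ℝ (Set.range v)
  have : FiniteDimensional ℝ S := FiniteDimensional.span_of_finite ℝ (Set.finite_range v)
  let v' : ι → S := fun j ↦ ⟨v j, Submodule.subset_span (Set.mem_range_self j)⟩
  have hv' : ∑ j, v' j = 0 := Subtype.ext (by simpa [v'] using hv)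
  simpa [v'] using sum_norm_sq_sum_smul_le_of_finiteDimensional hW hv'

lemma sqrt_sum_norm_sq_sum_smul_le {W : κ → ι → ℝ} {β : ℝ} (hβ : 0 ≤ β)
    (hW : ∀ a : ι → ℝ, ∑ j, a j = 0 → √(∑ i, (∑ j, W i j * a j) ^ 2) ≤ β * √(∑ j, a j ^ 2))
    {v : ι → E} (hv : ∑ j, v j = 0) :
    √(∑ i, ‖∑ j, W i j • v j‖ ^ 2) ≤ β * √(∑ j, ‖v j‖ ^ 2) := by
  have hW_sq : ∀ a : ι → ℝ, ∑ j, a j = 0 →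
      ∑ i, (∑ j, W i j * a j) ^ 2 ≤ β ^ 2 * ∑ j, a j ^ 2 := fun a ha ↦ by
    have hsq := (Real.sqrt_le_iff.1 (hW a ha)).2
    rwa [mul_pow, Real.sq_sqrt (by positivity)] at hsq
  refine Real.sqrt_le_iff.2 ⟨by positivity, ?_⟩
  rw [mul_pow, Real.sq_sqrt (by positivity)]
  exact sum_norm_sq_sum_smul_le hW_sq hv

lemma norm_le_div_mul_norm_of_norm_sq_le_inner {v w g : E} {α β : ℝ} (hα : 0 ≤ α) (hβ : β < 1)
    (hinner : ‖v‖ ^ 2 ≤ ⟪v, w - α • g⟫) (hw : ‖w‖ ≤ β * ‖v‖) :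
    ‖v‖ ≤ α / (1 - β) * ‖g‖ := by
  have hbound : ‖v‖ * ‖v‖ ≤ ‖v‖ * (β * ‖v‖ + α * ‖g‖) :=
    calc ‖v‖ * ‖v‖ ≤ ⟪v, w - α • g⟫ := by rwa [← sq]
      _ ≤ ‖v‖ * ‖w - α • g‖ := real_inner_le_norm _ _
      _ ≤ ‖v‖ * (‖w‖ + ‖α • g‖) := by gcongr; exact norm_sub_le _ _
      _ ≤ ‖v‖ * (β * ‖v‖ + α * ‖g‖) := by
        rw [norm_smul, Real.norm_of_nonneg hα]; gcongr
  have hβ' : 0 < 1 - β := sub_pos.2 hβ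
  rcases (norm_nonneg v).eq_or_lt with hv | hv
  · rw [← hv]; positivity
  · rw [div_mul_eq_mul_div, le_div_iff₀ hβ']
    linarith [le_of_mul_le_mul_left hbound hv]

end InnerProduct

theorem stmt5_general {ι E : Type*} [Fintype ι] [NormedAddCommGroup E] [InnerProductSpace ℝ E]
    {s : Set E} {φ : E → ℝ} (hφ : ConvexOn ℝ s φ)
    {W : ι → ι → ℝ} (hWstoch : ∀ i, ∑ j, W i j = 1)
    {β : ℝ} (hβ0 : 0 ≤ β) (hβ1 : β < 1)
    (hWspec : ∀ v : ι → ℝ, ∑ i, v i = 0 →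
      √(∑ i, (∑ j, W i j * v j) ^ 2) ≤ β * √(∑ i, v i ^ 2))
    {α : ℝ} (hα : 0 ≤ α) {x g : ι → E}
    (hx : ∀ i, IsProxOn s (fun y ↦ α * φ y) (∑ j, W i j • x j - α • g i) (x i)) :
    √(∑ i, ‖x i - (Fintype.card ι : ℝ)⁻¹ • ∑ j, x j‖ ^ 2) ≤
      α / (1 - β) * √(∑ i, ‖g i‖ ^ 2) := by
  let mixed : ι → E := fun i ↦ ∑ j, W i j • deviation x j
  have hinner : ∑ i, ‖deviation x i‖ ^ 2 ≤ ∑ i, ⟪deviation x i, mixed i - α • g i⟫ := by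
    refine sum_norm_sq_le_sum_inner (sum_deviation x) fun i j ↦ ?_
    convert (hx i).norm_sub_sq_le_inner (hφ.smul hα) (hx j) using 2
    · rw [deviation_sub_deviation]
    · exact deviation_sub_deviation x i j
    · simp only [mixed, sum_smul_deviation (hWstoch _)]
      abel
  have hmixed : √(∑ i, ‖mixed i‖ ^ 2) ≤ β * √(∑ i, ‖deviation x i‖ ^ 2) :=
    sqrt_sum_norm_sq_sum_smul_le hβ0 hWspec (sum_deviation x)
  simpa only [PiLp.norm_eq_of_L2, deviation] using
    norm_le_div_mul_norm_of_norm_sq_le_inner (v := WithLp.toLp 2 (deviation x))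
      (w := WithLp.toLp 2 mixed) (g := WithLp.toLp 2 g) hα hβ1
      (by simpa [PiLp.norm_sq_eq_of_L2, PiLp.inner_apply] using hinner)
      (by simpa only [PiLp.norm_eq_of_L2] using hmixed)

/-- For convex differentiable `fᵢ` with gradients `f'ᵢ`, a single proper
closed convex `h`, and a fixed point `x⋆` of synchronous Prox-DGD
(`x⋆ᵢ = prox_{αh}(∑ⱼ wᵢⱼ x⋆ⱼ − α∇fᵢ(x⋆ᵢ))`), one has
`‖x⋆ − 𝐱̄⋆‖ ≤ (α/(1 − β))·‖g⋆‖` where `g⋆ = (∇f₁(x⋆₁),…,∇fₙ(x⋆ₙ))`. -/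
theorem stmt5 (n d : ℕ) (hn : 0 < n)
    (f : Fin n → EuclideanSpace ℝ (Fin d) → ℝ)
    (f' : Fin n → EuclideanSpace ℝ (Fin d) → EuclideanSpace ℝ (Fin d))
    (hfconv : ∀ i, ConvexOn ℝ Set.univ (f i))
    (hgrad : ∀ i x, HasGradientAt (f i) (f' i x) x)
    (h : EuclideanSpace ℝ (Fin d) → EReal)
    (hh : ProperClosedConvex h)
    (W : Fin n → Fin n → ℝ)
    (hWsymm : ∀ i j, W i j = W j i)
    (hWnonneg : ∀ i j, 0 ≤ W i j)
    (hWstoch : ∀ i, ∑ j, W i j = 1)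
    (β : ℝ) (hβ0 : 0 ≤ β) (hβ1 : β < 1)
    (hWspec : ∀ v : Fin n → ℝ, (∑ i, v i) = 0 →
      Real.sqrt (∑ i, (∑ j, W i j * v j) ^ 2) ≤ β * Real.sqrt (∑ i, v i ^ 2))
    (α : ℝ) (hα : 0 < α)
    -- `x⋆` is a fixed point of synchronous Prox-DGD
    (xstar : Fin n → EuclideanSpace ℝ (Fin d))
    (hfix : ∀ i, IsProxPt α h
      ((∑ j, W i j • xstar j) - α • f' i (xstar i)) (xstar i)) :
    Real.sqrt (∑ i, ‖xstar i - (n : ℝ)⁻¹ • ∑ j, xstar j‖ ^ 2)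
      ≤ α / (1 - β) * Real.sqrt (∑ i, ‖f' i (xstar i)‖ ^ 2) := by
  simpa only [Fintype.card_fin] using
    stmt5_general hh.convexOn_toReal hWstoch hβ0 hβ1 hWspec hα.le
      fun i ↦ (hfix i).isProxOn_toReal hh hα
end

section
/- (Theorem 1, total asynchrony.) Let W ∈ ℝ^{n×n} be symmetric, entrywise nonnegative, stochastic with w_{ii} > 0; let each f_i : ℝ^d → ℝ be μ_i-strongly convex with L_i-Lipschitz gradient and each h_i : ℝ^d → ℝ ∪ {+∞} proper, closed, convex; let 0 < α < 2·min_i (w_{ii}/L_i). Consider iterates x^k ∈ (ℝ^d)^n, activation sets K_i ⊆ ℕ, and delay indices s_{ij}^k ∈ {0,…,k} with s_{ii}^k = k, satisfying the asynchronous Prox-DGD recursion: for k ∈ K_i, x_i^{k+1} = prox_{αh_i}( Σ_j w_{ij} x_j^{s_{ij}^k} − α∇f_i(x_i^k) ), and x_i^{k+1} = x_i^k for k ∉ K_i. Assume total asynchrony: each K_i is infinite and lim_{k→∞} s_{ij}^k = +∞ for all i and j with w_{ij} > 0. Then the sequence (x^k) converges to the unique point x* satisfying x*_i = prox_{αh_i}(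 Σ_j w_{ij} x*_j − α∇f_i(x*_i) ) for all i (a fixed point of synchronous Prox-DGD). -/
open scoped RealInnerProductSpace
open Filter

/-!
The argument `∑ⱼ wᵢⱼ zⱼ - α ∇fᵢ(zᵢ)` of the proximal operator splits into an own part
`wᵢᵢ zᵢ - α ∇fᵢ(zᵢ)` and the contribution `∑_{j ≠ i} wᵢⱼ zⱼ` of the neighbours. Since `∇fᵢ` is
cocoercive and strongly monotone, `α < 2 wᵢᵢ / Lᵢ` makes the own part Lipschitz with a constant
`cᵢ < wᵢᵢ`, while the neighbours contribute at most `1 - wᵢᵢ`. As proximal operators are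
nonexpansive, synchronous Prox-DGD is a contraction with factor `ρ = maxᵢ (1 - wᵢᵢ + cᵢ) < 1` for
the block-maximum norm. Asynchronous runs of such a contraction converge to its fixed point: delays
cannot increase the maximal block error, and once every block has been updated with data whose
error is at most `M`, all errors are at most `ρ M` from then on.
-/

open Metric Set Topology
open scoped NNReal

section Gradient

variable {E : Type*} [NormedAddCommGroup E] [InnerProductSpace ℝ E] [CompleteSpace E]
  {f : E → ℝ} {f' : E → E}

lemma le_add_inner_add_half_of_inner_gradient_sub_le (hf : ∀ z, HasGradientAt f (f' z) z)
    {x v : E} {C : ℝ} (hC : ∀ t ∈ Ico (0 : ℝ) 1, ⟪f' (x + t • v) - f' x, v⟫ ≤ t * C) :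
    f (x + v) ≤ f x + ⟪f' x, v⟫ + C / 2 := by
  have hasDerivAt_line (t : ℝ) :
      HasDerivAt (fun t : ℝ => f (x + t • v)) ⟪f' (x + t • v), v⟫ t := by
    have line : HasDerivAt (fun t : ℝ => x + t • v) v t := by
      simpa using ((hasDerivAt_id t).smul_const v).const_add x
    exact (hf (x + t • v)).hasFDerivAt.comp_hasDerivAt t line
  have hasDerivAt_bound (t : ℝ) :
      HasDerivAt (fun t : ℝ => f x + t * ⟪f' x, v⟫ + t ^ 2 * (C / 2)) (⟪f' x, v⟫ + t * C) t := by
    refine ((((hasDerivAt_id t).mul_const ⟪f' x, v⟫).const_add (f x)).add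
      ((hasDerivAt_pow 2 t).mul_const (C / 2))).congr_deriv ?_
    simp only [Nat.cast_ofNat]
    ring
  have bound_at_one := image_le_of_deriv_right_le_deriv_boundary
    (fun t _ => (hasDerivAt_line t).continuousAt.continuousWithinAt)
    (fun t _ => (hasDerivAt_line t).hasDerivWithinAt) (by simp)
    (fun t _ => (hasDerivAt_bound t).continuousAt.continuousWithinAt)
    (fun t _ => (hasDerivAt_bound t).hasDerivWithinAt)
    (fun t ht => by
      have := hC t ht
      rw [inner_sub_left] at this
      linarith)
    (right_mem_Icc.2 zero_le_one)
  simpa using bound_at_one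

lemma le_add_inner_add_sq_of_lipschitz_gradient (hf : ∀ z, HasGradientAt f (f' z) z) {L : ℝ}
    (hlip : ∀ y z, ‖f' y - f' z‖ ≤ L * ‖y - z‖) (x v : E) :
    f (x + v) ≤ f x + ⟪f' x, v⟫ + L / 2 * ‖v‖ ^ 2 := by
  have bound := le_add_inner_add_half_of_inner_gradient_sub_le hf (x := x) (v := v)
    (C := L * ‖v‖ ^ 2) fun t ht => by
      calc ⟪f' (x + t • v) - f' x, v⟫ ≤ ‖f' (x + t • v) - f' x‖ * ‖v‖ := real_inner_le_norm _ _
        _ ≤ L * ‖x + t • v - x‖ * ‖v‖ := by gcongr; exact hlip _ _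
        _ = t * (L * ‖v‖ ^ 2) := by
          rw [add_sub_cancel_left, norm_smul, Real.norm_of_nonneg ht.1]
          ring
  linarith

lemma add_inner_le_of_monotone_gradient (hf : ∀ z, HasGradientAt f (f' z) z)
    (hmono : ∀ y z, 0 ≤ ⟪f' y - f' z, y - z⟫) (x v : E) :
    f x + ⟪f' x, v⟫ ≤ f (x + v) := by
  have hneg (z : E) : HasGradientAt (fun y => -f y) (-f' z) z :=
    hasGradientAt_iff_hasFDerivAt.2 (map_neg (InnerProductSpace.toDual ℝ E) (f' z) ▸
      (hf z).hasFDerivAt.fun_neg)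
  have bound := le_add_inner_add_half_of_inner_gradient_sub_le hneg (x := x) (v := v) (C := 0)
    fun t ht => by
      rcases ht.1.eq_or_lt with rfl | ht0
      · simp
      have := hmono (x + t • v) x
      rw [add_sub_cancel_left, inner_smul_right] at this
      have := nonneg_of_mul_nonneg_right this ht0
      rw [neg_sub_neg, ← neg_sub, inner_neg_left]
      linarith
  rw [inner_neg_left] at bound
  linarith

-- Compare `f` with its linearization at `x` at the point reached by a gradient step from `y` on
-- `f - ⟪f' x, ·⟫`, which is minimal at `x`.
lemma add_inner_add_sq_le_of_monotone_lipschitz_gradient (hf : ∀ z, HasGradientAt f (f' z) z)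
    {L : ℝ} (hL : 0 < L) (hlip : ∀ y z, ‖f' y - f' z‖ ≤ L * ‖y - z‖)
    (hmono : ∀ y z, 0 ≤ ⟪f' y - f' z, y - z⟫) (x y : E) :
    f x + ⟪f' x, y - x⟫ + ‖f' y - f' x‖ ^ 2 / (2 * L) ≤ f y := by
  set g := f' y - f' x with hg
  have lower := add_inner_le_of_monotone_gradient hf hmono x (y - x + (-L⁻¹) • g)
  have upper := le_add_inner_add_sq_of_lipschitz_gradient hf hlip y ((-L⁻¹) • g)
  have inner_g : ⟪f' y, g⟫ = ⟪f' x, g⟫ + ‖g‖ ^ 2 := by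
    rw [← real_inner_self_eq_norm_sq, ← inner_add_left, hg, add_sub_cancel]
  rw [← add_assoc, add_sub_cancel, inner_add_right, inner_smul_right] at lower
  rw [inner_smul_right, inner_g, norm_smul, mul_pow, Real.norm_eq_abs, sq_abs] at upper
  have quadratic : L / 2 * ((-L⁻¹) ^ 2 * ‖g‖ ^ 2) = ‖g‖ ^ 2 / (2 * L) := by field_simp
  have linear : L⁻¹ * ‖g‖ ^ 2 = 2 * (‖g‖ ^ 2 / (2 * L)) := by field_simp
  linarith

theorem norm_gradient_sub_sq_le_of_monotone_lipschitz (hf : ∀ z, HasGradientAt f (f' z) z)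
    {L : ℝ} (hL : 0 < L) (hlip : ∀ y z, ‖f' y - f' z‖ ≤ L * ‖y - z‖)
    (hmono : ∀ y z, 0 ≤ ⟪f' y - f' z, y - z⟫) (x y : E) :
    ‖f' x - f' y‖ ^ 2 ≤ L * ⟪f' x - f' y, x - y⟫ := by
  have hxy := add_inner_add_sq_le_of_monotone_lipschitz_gradient hf hL hlip hmono x y
  have hyx := add_inner_add_sq_le_of_monotone_lipschitz_gradient hf hL hlip hmono y x
  rw [norm_sub_rev, ← neg_sub x y, inner_neg_right] at hxy
  have sum_le : 2 * (‖f' x - f' y‖ ^ 2 / (2 * L)) ≤ ⟪f' x - f' y, x - y⟫ := by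
    rw [inner_sub_left]
    linarith
  calc ‖f' x - f' y‖ ^ 2 = L * (2 * (‖f' x - f' y‖ ^ 2 / (2 * L))) := by field_simp
    _ ≤ L * ⟪f' x - f' y, x - y⟫ := by gcongr

theorem exists_lipschitzWith_smul_sub_smul_gradient (hf : ∀ z, HasGradientAt f (f' z) z)
    {L μ w α : ℝ} (hL : 0 < L) (hμ : 0 < μ) (hα : 0 < α) (hαw : α < 2 * (w / L))
    (hlip : ∀ y z, ‖f' y - f' z‖ ≤ L * ‖y - z‖)
    (hsc : ∀ y z, μ * ‖y - z‖ ^ 2 ≤ ⟪f' y - f' z, y - z⟫) :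
    ∃ c : ℝ≥0, c < w ∧ LipschitzWith c fun z => w • z - α • f' z := by
  have gap : 0 < 2 * w - α * L := by
    rw [mul_div_assoc', lt_div_iff₀ hL] at hαw
    linarith
  have hw : 0 < w := by nlinarith [mul_pos hα hL]
  refine ⟨NNReal.sqrt (w ^ 2 - α * (2 * w - α * L) * μ).toNNReal, ?_,
    LipschitzWith.of_dist_le_mul fun y z => ?_⟩
  · rw [Real.coe_sqrt, Real.coe_toNNReal', Real.sqrt_lt' hw]
    exact max_lt (sub_lt_self _ (by positivity)) (by positivity)
  have cocoercive := norm_gradient_sub_sq_le_of_monotone_lipschitz hf hL hlip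
    (fun y z => le_trans (by positivity) (hsc y z)) y z
  have sq_le : ‖w • (y - z) - α • (f' y - f' z)‖ ^ 2
      ≤ (w ^ 2 - α * (2 * w - α * L) * μ) * ‖y - z‖ ^ 2 :=
    calc ‖w • (y - z) - α • (f' y - f' z)‖ ^ 2
        = w ^ 2 * ‖y - z‖ ^ 2 - 2 * w * α * ⟪f' y - f' z, y - z⟫
            + α ^ 2 * ‖f' y - f' z‖ ^ 2 := by
          rw [norm_sub_sq_real, real_inner_smul_left, real_inner_smul_right, norm_smul, norm_smul,
            mul_pow, mul_pow, Real.norm_eq_abs, Real.norm_eq_abs, sq_abs, sq_abs, real_inner_comm]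
          ring
      _ ≤ w ^ 2 * ‖y - z‖ ^ 2 - 2 * w * α * ⟪f' y - f' z, y - z⟫
            + α ^ 2 * (L * ⟪f' y - f' z, y - z⟫) := by gcongr
      _ = w ^ 2 * ‖y - z‖ ^ 2 - α * (2 * w - α * L) * ⟪f' y - f' z, y - z⟫ := by ring
      _ ≤ w ^ 2 * ‖y - z‖ ^ 2 - α * (2 * w - α * L) * (μ * ‖y - z‖ ^ 2) := by
          gcongr
          exact hsc y z
      _ = (w ^ 2 - α * (2 * w - α * L) * μ) * ‖y - z‖ ^ 2 := by ring
  rw [dist_eq_norm, dist_eq_norm, sub_sub_sub_comm, ← smul_sub, ← smul_sub]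
  refine le_of_sq_le_sq ?_ (by positivity)
  rw [mul_pow, Real.coe_sqrt, Real.sq_sqrt (NNReal.coe_nonneg _)]
  exact sq_le.trans (by gcongr; exact Real.le_coe_toNNReal _)

end Gradient

section Prox

variable {d : ℕ} {α : ℝ} {h : EuclideanSpace ℝ (Fin d) → EReal}
  {u v p q y : EuclideanSpace ℝ (Fin d)}

lemma ProperClosedConvex.apply_combo_le (hh : ProperClosedConvex h) {a b : ℝ}
    (hy : h y = b) (hp : h p = a) {t : ℝ} (ht0 : 0 ≤ t) (ht1 : t ≤ 1) :
    h (t • y + (1 - t) • p) ≤ ((t * b + (1 - t) * a : ℝ) : EReal) := by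
  simpa only [hy, hp, ← EReal.coe_mul, ← EReal.coe_add] using hh.2.2.2 y p t ht0 ht1

lemma ProperClosedConvex.exists_affine_norm_le (hh : ProperClosedConvex h) {a : ℝ}
    (hp : h p = a) :
    ∃ c C : ℝ, 0 ≤ C ∧ ∀ y, ((c - C * ‖y - p‖ : ℝ) : EReal) ≤ h y := by
  obtain ⟨q, -, hq⟩ := (hh.2.2.1.lowerSemicontinuousOn _).exists_isMinOn
    ⟨p, mem_closedBall_self zero_le_one⟩ (isCompact_closedBall p 1)
  have hqa : h q ≤ a := hp ▸ hq (mem_closedBall_self zero_le_one)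
  lift h q to ℝ using ⟨ne_top_of_le_ne_top (EReal.coe_ne_top a) hqa, hh.2.1 q⟩ with m hm
  have hma : m ≤ a := EReal.coe_le_coe_iff.1 hqa
  have le_of_mem_ball {y} (hy : ‖y - p‖ ≤ 1) : (m : EReal) ≤ h y :=
    hm.trans_le (hq (mem_closedBall_iff_norm.2 hy))
  refine ⟨m, a - m, sub_nonneg.2 hma, fun y => ?_⟩
  rcases le_total ‖y - p‖ 1 with hy | hy
  · refine le_trans (EReal.coe_le_coe_iff.2 ?_) (le_of_mem_ball hy)
    nlinarith [norm_nonneg (y - p)]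
  by_cases htop : h y = ⊤
  · exact htop ▸ le_top
  lift h y to ℝ using ⟨htop, hh.2.1 y⟩ with b hb
  have hr : 0 < ‖y - p‖ := one_pos.trans_le hy
  -- The segment from `p` to `y` leaves the unit ball at `‖y - p‖⁻¹ • y + (1 - ‖y - p‖⁻¹) • p`.
  have hboundary : ‖‖y - p‖⁻¹ • y + (1 - ‖y - p‖⁻¹) • p - p‖ ≤ 1 := by
    rw [show ‖y - p‖⁻¹ • y + (1 - ‖y - p‖⁻¹) • p - p = ‖y - p‖⁻¹ • (y - p) by module, norm_smul,
      norm_inv, norm_norm, inv_mul_cancel₀ hr.ne']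
  have hconv := EReal.coe_le_coe_iff.1 <| (le_of_mem_ball hboundary).trans <|
    hh.apply_combo_le hb.symm hp (inv_nonneg.2 hr.le) (inv_le_one_of_one_le₀ hy)
  have hscaled : ‖y - p‖ * m ≤ b + (‖y - p‖ - 1) * a :=
    calc ‖y - p‖ * m ≤ ‖y - p‖ * (‖y - p‖⁻¹ * b + (1 - ‖y - p‖⁻¹) * a) := by gcongr
      _ = b + (‖y - p‖ - 1) * a := by field_simp
  exact EReal.coe_le_coe_iff.2 (by linarith)

lemma lowerSemicontinuous_coe_mul_add_half_sq (hα : 0 < α) (hh : LowerSemicontinuous h)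
    (u : EuclideanSpace ℝ (Fin d)) :
    LowerSemicontinuous fun y => (α : EReal) * h y + ((1 / 2 * ‖y - u‖ ^ 2 : ℝ) : EReal) := by
  have continuous_mul : Continuous fun z : EReal => (α : EReal) * z :=
    continuous_iff_continuousAt.2 fun z =>
      ContinuousAt.comp (f := fun z : EReal => ((α : EReal), z))
        (EReal.continuousAt_mul (by simp [hα.ne']) (by simp [hα.ne']) (by simp) (by simp))
        (by fun_prop)
  have monotone_mul : Monotone fun z : EReal => (α : EReal) * z := fun _ _ hz =>
    mul_le_mul_of_nonneg_left hz (EReal.coe_nonneg.2 hα.le)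
  refine (continuous_mul.comp_lowerSemicontinuous hh monotone_mul).add'
    (continuous_coe_real_ereal.comp (by fun_prop)).lowerSemicontinuous fun y => ?_
  exact EReal.continuousAt_add (.inr (EReal.coe_ne_bot _)) (.inr (EReal.coe_ne_top _))

theorem ProperClosedConvex.exists_isProxPt (hh : ProperClosedConvex h) (hα : 0 < α)
    (u : EuclideanSpace ℝ (Fin d)) : ∃ p, IsProxPt α h u p := by
  obtain ⟨x₀, hx₀⟩ := hh.1
  have ha := (EReal.coe_toReal hx₀ (hh.2.1 x₀)).symm
  set a := (h x₀).toReal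
  obtain ⟨c, C, hC, hbound⟩ := hh.exists_affine_norm_le ha
  have hca : c ≤ a := by simpa [ha] using hbound x₀
  -- The quadratic term beats the affine lower bound outside this ball.
  set R := 1 + 2 * (α * C + ‖x₀ - u‖ + α * (a - c))
  have hδ := norm_nonneg (x₀ - u)
  have hαC := mul_nonneg hα.le hC
  have hαac := mul_nonneg hα.le (sub_nonneg.2 hca)
  have hx₀R : x₀ ∈ closedBall x₀ R := mem_closedBall_self (by linarith)
  have hlsc := lowerSemicontinuous_coe_mul_add_half_sq hα hh.2.2.1 u
  obtain ⟨p, -, hp⟩ := (hlsc.lowerSemicontinuousOn _).exists_isMinOn ⟨x₀, hx₀R⟩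
    (isCompact_closedBall x₀ R)
  refine ⟨p, fun y => ?_⟩
  by_cases hy : y ∈ closedBall x₀ R
  · exact hp hy
  rw [mem_closedBall_iff_norm, not_le] at hy
  have hreal : α * a + 1 / 2 * ‖x₀ - u‖ ^ 2
      ≤ α * (c - C * ‖y - x₀‖) + 1 / 2 * ‖y - u‖ ^ 2 := by
    have htri : ‖y - x₀‖ - ‖x₀ - u‖ ≤ ‖y - u‖ := by
      linarith [norm_sub_le_norm_sub_add_norm_sub y u x₀, norm_sub_rev u x₀]
    have hsq : (‖y - x₀‖ - ‖x₀ - u‖) ^ 2 ≤ ‖y - u‖ ^ 2 := by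
      gcongr
      linarith
    nlinarith
  calc _ ≤ (α : EReal) * h x₀ + ((1 / 2 * ‖x₀ - u‖ ^ 2 : ℝ) : EReal) := hp hx₀R
    _ ≤ (α : EReal) * ((c - C * ‖y - x₀‖ : ℝ) : EReal) + ((1 / 2 * ‖y - u‖ ^ 2 : ℝ) : EReal) := by
      rw [ha]
      exact_mod_cast hreal
    _ ≤ _ := add_le_add_left
      (mul_le_mul_of_nonneg_left (hbound y) (EReal.coe_nonneg.2 hα.le)) _

lemma IsProxPt.exists_apply_eq_coe (hp : IsProxPt α h u p) (hh : ProperClosedConvex h)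
    (hα : 0 < α) : ∃ a : ℝ, h p = a := by
  obtain ⟨y, hy⟩ := hh.1
  lift h y to ℝ using ⟨hy, hh.2.1 y⟩ with b hb
  have hpy := hp y
  have hp_ne_top : h p ≠ ⊤ := by
    intro htop
    rw [htop, ← hb, EReal.coe_mul_top_of_pos hα, EReal.top_add_coe, ← EReal.coe_mul,
      ← EReal.coe_add] at hpy
    exact EReal.coe_ne_top _ (top_le_iff.1 hpy)
  exact ⟨(h p).toReal, (EReal.coe_toReal hp_ne_top (hh.2.1 p)).symm⟩

-- Compare `p` with `t • y + (1 - t) • p` and let `t → 0⁺`.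
lemma IsProxPt.mul_sub_le_inner (hp : IsProxPt α h u p) (hh : ProperClosedConvex h) (hα : 0 < α)
    {a b : ℝ} (ha : h p = a) (hb : h y = b) : α * (a - b) ≤ ⟪p - u, y - p⟫ := by
  have le_perturbed {t : ℝ} (ht : t ∈ Ioc (0 : ℝ) 1) :
      α * (a - b) ≤ ⟪p - u, y - p⟫ + t * (1 / 2 * ‖y - p‖ ^ 2) := by
    have hmin := (hp (t • y + (1 - t) • p)).trans <| add_le_add_left
      (mul_le_mul_of_nonneg_left (hh.apply_combo_le hb ha ht.1.le ht.2)
        (EReal.coe_nonneg.2 hα.le)) _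
    rw [ha] at hmin
    norm_cast at hmin
    rw [show t • y + (1 - t) • p - u = p - u + t • (y - p) by module, norm_add_sq_real,
      inner_smul_right, norm_smul, mul_pow, Real.norm_eq_abs, sq_abs] at hmin
    refine le_of_mul_le_mul_left ?_ ht.1
    linarith
  have perturbed_tendsto : Tendsto (fun t => ⟪p - u, y - p⟫ + t * (1 / 2 * ‖y - p‖ ^ 2))
      (𝓝[>] (0 : ℝ)) (𝓝 ⟪p - u, y - p⟫) :=
    tendsto_nhdsWithin_of_tendsto_nhds <| Continuous.tendsto' (by fun_prop) _ _ (by simp)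
  exact ge_of_tendsto perturbed_tendsto <|
    mem_of_superset (Ioc_mem_nhdsGT zero_lt_one) fun _ => le_perturbed

theorem IsProxPt.norm_sub_le (hp : IsProxPt α h u p) (hq : IsProxPt α h v q)
    (hh : ProperClosedConvex h) (hα : 0 < α) : ‖p - q‖ ≤ ‖u - v‖ := by
  obtain ⟨a, ha⟩ := hp.exists_apply_eq_coe hh hα
  obtain ⟨b, hb⟩ := hq.exists_apply_eq_coe hh hα
  have opt_p := hp.mul_sub_le_inner hh hα ha hb
  have opt_q := hq.mul_sub_le_inner hh hα hb ha
  have inner_sum : ⟪p - u, q - p⟫ + ⟪q - v, p - q⟫ = ⟪u - v, p - q⟫ - ‖p - q‖ ^ 2 := by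
    rw [← real_inner_self_eq_norm_sq, ← neg_sub p q, inner_neg_right, ← sub_eq_neg_add,
      ← inner_sub_left, ← inner_sub_left]
    congr 1
    abel
  have sq_le : ‖p - q‖ * ‖p - q‖ ≤ ‖u - v‖ * ‖p - q‖ := by
    linarith [real_inner_le_norm (u - v) (p - q)]
  rcases (norm_nonneg (p - q)).eq_or_lt with hzero | hpos
  · exact hzero ▸ norm_nonneg _
  · exact le_of_mul_le_mul_right sq_le hpos

/-- The proximal operator `prox_{αh}`, an arbitrary point where `y ↦ αh(y) + ½‖y − u‖²` has no
minimizer. -/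
noncomputable def prox (α : ℝ) (h : EuclideanSpace ℝ (Fin d) → EReal)
    (u : EuclideanSpace ℝ (Fin d)) : EuclideanSpace ℝ (Fin d) :=
  Classical.epsilon (IsProxPt α h u)

lemma isProxPt_prox (hh : ProperClosedConvex h) (hα : 0 < α) (u : EuclideanSpace ℝ (Fin d)) :
    IsProxPt α h u (prox α h u) :=
  Classical.epsilon_spec (hh.exists_isProxPt hα u)

theorem isProxPt_iff_eq_prox (hh : ProperClosedConvex h) (hα : 0 < α) :
    IsProxPt α h u p ↔ p = prox α h u := by
  refine ⟨fun hp => ?_, fun hp => hp ▸ isProxPt_prox hh hα u⟩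
  simpa [sub_eq_zero] using hp.norm_sub_le (isProxPt_prox hh hα u) hh hα

theorem lipschitzWith_one_prox (hh : ProperClosedConvex h) (hα : 0 < α) :
    LipschitzWith 1 (prox α h) :=
  LipschitzWith.of_dist_le_mul fun u v => by
    simpa [dist_eq_norm] using
      (isProxPt_prox hh hα u).norm_sub_le (isProxPt_prox hh hα v) hh hα

end Prox

section Asynchronous

variable {ι : Type*} {X : ι → Type*} {T : (∀ i, X i) → ∀ i, X i} {K : ι → Set ℕ}
  {s : ι → ι → ℕ → ℕ} {x : ℕ → ∀ i, X i} {y : ∀ i, X i} {nbr : ι → ι → Prop} {ρ : ℝ≥0}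

/-- `T` is `ρ`-Lipschitz for the supremum distance, and its `i`-th block depends only on the
blocks `j` with `nbr i j`, those that agent `i` reads. -/
def IsBlockLipschitz [∀ i, PseudoMetricSpace (X i)] (nbr : ι → ι → Prop) (ρ : ℝ≥0)
    (T : (∀ i, X i) → ∀ i, X i) : Prop :=
  ∀ i z w (M : ℝ), 0 ≤ M → (∀ j, nbr i j → dist (z j) (w j) ≤ M) → dist (T z i) (T w i) ≤ ρ * M

/-- `x` is an asynchronous run of the iteration `z ↦ T z`: at the times `k ∈ K i` agent `i`
replaces its block by that of `T` evaluated at the outdated values `x (s i j k) j`, and it is idle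
at all other times. -/
structure IsAsyncIteration (T : (∀ i, X i) → ∀ i, X i) (K : ι → Set ℕ) (s : ι → ι → ℕ → ℕ)
    (x : ℕ → ∀ i, X i) : Prop where
  update : ∀ i, ∀ k ∈ K i, x (k + 1) i = T (fun j => x (s i j k) j) i
  keep : ∀ i, ∀ k ∉ K i, x (k + 1) i = x k i

lemma IsBlockLipschitz.lipschitzWith [Fintype ι] [∀ i, PseudoMetricSpace (X i)]
    (hT : IsBlockLipschitz nbr ρ T) : LipschitzWith ρ T :=
  LipschitzWith.of_dist_le_mul fun z w => (dist_pi_le_iff (by positivity)).2 fun i =>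
    hT i z w _ dist_nonneg fun j _ => dist_le_pi_dist z w j

namespace IsAsyncIteration

variable [∀ i, PseudoMetricSpace (X i)]

lemma dist_le (hx : IsAsyncIteration T K s x) (hT : IsBlockLipschitz nbr ρ T) (hρ : ρ ≤ 1)
    (hy : Function.IsFixedPt T y) (hs_le : ∀ i j k, s i j k ≤ k) {M : ℝ} (hM : 0 ≤ M)
    (hzero : ∀ i, dist (x 0 i) (y i) ≤ M) (k : ℕ) (i : ι) : dist (x k i) (y i) ≤ M := by
  induction k using Nat.strong_induction_on generalizing i with
  | _ k ih =>
    rcases k with _ | k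
    · exact hzero i
    by_cases hk : k ∈ K i
    · rw [hx.update i k hk, ← congrFun hy i]
      refine (hT i _ y M hM fun j _ => ih _ (Nat.lt_succ_of_le (hs_le i j k)) j).trans ?_
      exact mul_le_of_le_one_left hM hρ
    · rw [hx.keep i k hk]
      exact ih k k.lt_succ_self i

lemma eventually_dist_le_mul [Finite ι] (hx : IsAsyncIteration T K s x)
    (hT : IsBlockLipschitz nbr ρ T) (hy : Function.IsFixedPt T y) (hK : ∀ i, (K i).Infinite)
    (hs : ∀ i j, nbr i j → Tendsto (s i j) atTop atTop) {M : ℝ} (hM : 0 ≤ M)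
    (hdist : ∀ᶠ k in atTop, ∀ i, dist (x k i) (y i) ≤ M) :
    ∀ᶠ k in atTop, ∀ i, dist (x k i) (y i) ≤ ρ * M := by
  refine eventually_all.2 fun i => ?_
  have reads_le : ∀ᶠ k in atTop, ∀ j, nbr i j → dist (x (s i j k) j) (y j) ≤ M :=
    eventually_all.2 fun j => eventually_imp_distrib_left.2 fun hij =>
      ((hs i j hij).eventually hdist).mono fun _ hk => hk j
  obtain ⟨N, hN⟩ := eventually_atTop.1 reads_le
  have update_le {k : ℕ} (hNk : N ≤ k) (hk : k ∈ K i) : dist (x (k + 1) i) (y i) ≤ ρ * M := by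
    rw [hx.update i k hk, ← congrFun hy i]
    exact hT i _ y M hM (hN k hNk)
  obtain ⟨k₀, hk₀, hNk₀⟩ := (hK i).exists_gt N
  refine eventually_atTop.2 ⟨k₀ + 1, fun k hk => ?_⟩
  induction k, hk using Nat.le_induction with
  | base => exact update_le hNk₀.le hk₀
  | succ k hk ih =>
    by_cases hkK : k ∈ K i
    · exact update_le (by omega) hkK
    · rwa [hx.keep i k hkK]

theorem tendsto_of_isFixedPt [Finite ι] (hx : IsAsyncIteration T K s x)
    (hT : IsBlockLipschitz nbr ρ T) (hρ : ρ < 1) (hy : Function.IsFixedPt T y)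
    (hs_le : ∀ i j k, s i j k ≤ k) (hK : ∀ i, (K i).Infinite)
    (hs : ∀ i j, nbr i j → Tendsto (s i j) atTop atTop) : Tendsto x atTop (𝓝 y) := by
  cases nonempty_fintype ι
  have eventually_dist_le (m : ℕ) :
      ∀ᶠ k in atTop, ∀ i, dist (x k i) (y i) ≤ ρ ^ m * dist (x 0) y := by
    induction m with
    | zero =>
      rw [pow_zero, one_mul]
      exact Eventually.of_forall
        (hx.dist_le hT hρ.le hy hs_le dist_nonneg fun i => dist_le_pi_dist (x 0) y i)
    | succ m ih =>
      simpa only [pow_succ', mul_assoc] using hx.eventually_dist_le_mul hT hy hK hs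
        (by positivity) ih
  have bound_tendsto : Tendsto (fun m : ℕ => (ρ : ℝ) ^ m * dist (x 0) y) atTop (𝓝 0) := by
    simpa using (tendsto_pow_atTop_nhds_zero_of_lt_one ρ.2 hρ).mul_const (dist (x 0) y)
  rw [Metric.tendsto_nhds]
  intro ε hε
  obtain ⟨m, hm⟩ := (bound_tendsto.eventually_lt_const hε).exists
  filter_upwards [eventually_dist_le m] with k hk
  exact ((dist_pi_le_iff (by positivity)).2 hk).trans_lt hm

end IsAsyncIteration

end Asynchronous

section ProxDGD

variable {ι : Type*} [Fintype ι]

/-- The argument `∑ⱼ wᵢⱼ zⱼ - α gᵢ(zᵢ)` of the proximal operator in block `i` of a Prox-DGD step: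
weighted averaging followed by a local gradient step, `g i` standing for `∇fᵢ`. -/
def mixingGradientStep {E : Type*} [AddCommGroup E] [Module ℝ E] (W : ι → ι → ℝ) (g : ι → E → E)
    (α : ℝ) (z : ι → E) (i : ι) : E :=
  ∑ j, W i j • z j - α • g i (z i)

/-- The synchronous Prox-DGD operator. -/
noncomputable def proxDGD {d : ℕ} (W : ι → ι → ℝ)
    (g : ι → EuclideanSpace ℝ (Fin d) → EuclideanSpace ℝ (Fin d))
    (h : ι → EuclideanSpace ℝ (Fin d) → EReal) (α : ℝ) (z : ι → EuclideanSpace ℝ (Fin d))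
    (i : ι) : EuclideanSpace ℝ (Fin d) :=
  prox α (h i) (mixingGradientStep W g α z i)

lemma dist_mixingGradientStep_le {E : Type*} [SeminormedAddCommGroup E] [NormedSpace ℝ E]
    {W : ι → ι → ℝ} {g : ι → E → E} {α : ℝ} {i : ι} (hW : ∀ j, 0 ≤ W i j)
    (hsum : ∑ j, W i j ≤ 1) (hii : 0 < W i i) {c : ℝ≥0}
    (hc : LipschitzWith c fun a => W i i • a - α • g i a) {z w : ι → E} {M : ℝ}
    (hzw : ∀ j, 0 < W i j → dist (z j) (w j) ≤ M) :
    dist (mixingGradientStep W g α z i) (mixingGradientStep W g α w i)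
      ≤ (1 - W i i + c) * M := by
  classical
  have decomp (a : ι → E) : mixingGradientStep W g α a i
      = (W i i • a i - α • g i (a i)) + ∑ j ∈ Finset.univ.erase i, W i j • a j := by
    rw [mixingGradientStep, ← Finset.add_sum_erase _ _ (Finset.mem_univ i)]
    abel
  have hM : 0 ≤ M := dist_nonneg.trans (hzw i hii)
  have own_le : dist (W i i • z i - α • g i (z i)) (W i i • w i - α • g i (w i)) ≤ c * M :=
    (hc.dist_le_mul _ _).trans (by gcongr; exact hzw i hii)
  have others_le : dist (∑ j ∈ Finset.univ.erase i, W i j • z j)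
      (∑ j ∈ Finset.univ.erase i, W i j • w j) ≤ (1 - W i i) * M :=
    calc _ ≤ ∑ j ∈ Finset.univ.erase i, W i j * M := by
          refine dist_sum_sum_le_of_le _ fun j _ => ?_
          rw [dist_smul₀, Real.norm_of_nonneg (hW j)]
          rcases (hW j).eq_or_lt with hzero | hpos
          · simp [← hzero]
          · exact mul_le_mul_of_nonneg_left (hzw j hpos) hpos.le
      _ ≤ (1 - W i i) * M := by
          rw [← Finset.sum_mul]
          gcongr
          linarith [Finset.add_sum_erase _ (W i) (Finset.mem_univ i)]
  rw [decomp, decomp]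
  linarith [dist_add_add_le (W i i • z i - α • g i (z i))
    (∑ j ∈ Finset.univ.erase i, W i j • z j) (W i i • w i - α • g i (w i))
    (∑ j ∈ Finset.univ.erase i, W i j • w j)]

variable {d : ℕ} {W : ι → ι → ℝ}
  {g : ι → EuclideanSpace ℝ (Fin d) → EuclideanSpace ℝ (Fin d)}
  {h : ι → EuclideanSpace ℝ (Fin d) → EReal} {α : ℝ}

theorem exists_isBlockLipschitz_proxDGD (hW : ∀ i j, 0 ≤ W i j) (hsum : ∀ i, ∑ j, W i j ≤ 1)
    (hh : ∀ i, ProperClosedConvex (h i)) (hα : 0 < α)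
    (hg : ∀ i, ∃ c : ℝ≥0, c < W i i ∧ LipschitzWith c fun a => W i i • a - α • g i a) :
    ∃ ρ < 1, IsBlockLipschitz (fun i j => 0 < W i j) ρ (proxDGD W g h α) := by
  choose c hcW hc using hg
  refine ⟨Finset.univ.sup fun i => (1 - W i i + c i).toNNReal, ?_, fun i z w M hM hzw => ?_⟩
  · refine (Finset.sup_lt_iff one_pos).2 fun i _ => Real.toNNReal_lt_one.2 ?_
    linarith [hcW i]
  calc dist (proxDGD W g h α z i) (proxDGD W g h α w i)
      ≤ dist (mixingGradientStep W g α z i) (mixingGradientStep W g α w i) := by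
        simpa [proxDGD] using (lipschitzWith_one_prox (hh i) hα).dist_le_mul _ _
    _ ≤ (1 - W i i + c i) * M :=
        dist_mixingGradientStep_le (hW i) (hsum i) ((c i).2.trans_lt (hcW i)) (hc i) hzw
    _ ≤ _ := by
        gcongr
        exact (Real.le_coe_toNNReal _).trans <| NNReal.coe_le_coe.2 <|
          Finset.le_sup (f := fun i => (1 - W i i + c i).toNNReal) (Finset.mem_univ i)

lemma isFixedPt_proxDGD_iff (hh : ∀ i, ProperClosedConvex (h i)) (hα : 0 < α)
    {y : ι → EuclideanSpace ℝ (Fin d)} :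
    Function.IsFixedPt (proxDGD W g h α) y ↔
      ∀ i, IsProxPt α (h i) ((∑ j, W i j • y j) - α • g i (y i)) (y i) :=
  funext_iff.trans <| forall_congr' fun i => eq_comm.trans (isProxPt_iff_eq_prox (hh i) hα).symm

end ProxDGD

theorem stmt11_general {ι : Type*} [Fintype ι] {d : ℕ} {W : ι → ι → ℝ}
    (hWnonneg : ∀ i j, 0 ≤ W i j) (hWsum : ∀ i, ∑ j, W i j ≤ 1)
    {f : ι → EuclideanSpace ℝ (Fin d) → ℝ}
    {f' : ι → EuclideanSpace ℝ (Fin d) → EuclideanSpace ℝ (Fin d)}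
    (hgrad : ∀ i x, HasGradientAt (f i) (f' i x) x) {μ : ι → ℝ} (hμ : ∀ i, 0 < μ i)
    (hsc : ∀ i x y, μ i * ‖x - y‖ ^ 2 ≤ ⟪f' i x - f' i y, x - y⟫)
    {L : ι → ℝ} (hL : ∀ i, 0 < L i) (hlip : ∀ i x y, ‖f' i x - f' i y‖ ≤ L i * ‖x - y‖)
    {h : ι → EuclideanSpace ℝ (Fin d) → EReal} (hh : ∀ i, ProperClosedConvex (h i))
    {α : ℝ} (hα0 : 0 < α) (hα1 : ∀ i, α < 2 * (W i i / L i))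
    {x : ℕ → ι → EuclideanSpace ℝ (Fin d)} {K : ι → Set ℕ} {s : ι → ι → ℕ → ℕ}
    (hs_le : ∀ i j k, s i j k ≤ k)
    (hupd : ∀ i k, k ∈ K i → IsProxPt α (h i)
      ((∑ j, W i j • x (s i j k) j) - α • f' i (x (s i i k) i)) (x (k + 1) i))
    (hkeep : ∀ i k, k ∉ K i → x (k + 1) i = x k i) (hKinf : ∀ i, (K i).Infinite)
    (hstot : ∀ i j, 0 < W i j → Tendsto (s i j) atTop atTop) :
    ∃ xstar : ι → EuclideanSpace ℝ (Fin d),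
      (∀ i, IsProxPt α (h i) ((∑ j, W i j • xstar j) - α • f' i (xstar i)) (xstar i)) ∧
      (∀ y : ι → EuclideanSpace ℝ (Fin d),
        (∀ i, IsProxPt α (h i) ((∑ j, W i j • y j) - α • f' i (y i)) (y i)) → y = xstar) ∧
      Tendsto x atTop (𝓝 xstar) := by
  obtain ⟨ρ, hρ, hT⟩ := exists_isBlockLipschitz_proxDGD hWnonneg hWsum hh hα0 fun i =>
    exists_lipschitzWith_smul_sub_smul_gradient (hgrad i) (hL i) (hμ i) hα0 (hα1 i) (hlip i) (hsc i)
  have hcontr : ContractingWith ρ (proxDGD W f' h α) := ⟨hρ, hT.lipschitzWith⟩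
  have hrun : IsAsyncIteration (proxDGD W f' h α) K s x :=
    ⟨fun i k hk => (isProxPt_iff_eq_prox (hh i) hα0).1 (hupd i k hk), hkeep⟩
  have hfix := hcontr.fixedPoint_isFixedPt
  exact ⟨_, (isFixedPt_proxDGD_iff hh hα0).1 hfix,
    fun y hy => hcontr.fixedPoint_unique ((isFixedPt_proxDGD_iff hh hα0).2 hy),
    hrun.tendsto_of_isFixedPt hT hρ hfix hs_le hKinf hstot⟩

/-- **Theorem 1, total asynchrony.** Under strong convexity, smoothness,
the delay-free step-size condition `0 < α < 2·minᵢ (wᵢᵢ/Lᵢ)`, and total asynchrony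
(every `Kᵢ` infinite, `sᵢⱼᵏ → ∞`), the asynchronous Prox-DGD iterates converge to the
unique fixed point of synchronous Prox-DGD. -/
theorem stmt11 (n d : ℕ) (hn : 0 < n)
    (W : Fin n → Fin n → ℝ)
    (hWsymm : ∀ i j, W i j = W j i)
    (hWnonneg : ∀ i j, 0 ≤ W i j)
    (hWstoch : ∀ i, ∑ j, W i j = 1)
    (hWdiag : ∀ i, 0 < W i i)
    (f : Fin n → EuclideanSpace ℝ (Fin d) → ℝ)
    (f' : Fin n → EuclideanSpace ℝ (Fin d) → EuclideanSpace ℝ (Fin d))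
    (hgrad : ∀ i x, HasGradientAt (f i) (f' i x) x)
    (μ : Fin n → ℝ) (hμ : ∀ i, 0 < μ i)
    (hsc : ∀ i x y, μ i * ‖x - y‖ ^ 2 ≤ ⟪f' i x - f' i y, x - y⟫)
    (L : Fin n → ℝ) (hL : ∀ i, 0 < L i)
    (hlip : ∀ i x y, ‖f' i x - f' i y‖ ≤ L i * ‖x - y‖)
    (h : Fin n → EuclideanSpace ℝ (Fin d) → EReal)
    (hh : ∀ i, ProperClosedConvex (h i))
    (α : ℝ) (hα0 : 0 < α) (hα1 : ∀ i, α < 2 * (W i i / L i))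
    -- the asynchronous iterates, activation sets, and delayed indices
    (x : ℕ → Fin n → EuclideanSpace ℝ (Fin d))
    (K : Fin n → Set ℕ)
    (s : Fin n → Fin n → ℕ → ℕ)
    (hs_le : ∀ i j k, s i j k ≤ k)
    (hs_self : ∀ i k, s i i k = k)
    -- the asynchronous Prox-DGD recursion
    (hupd : ∀ i k, k ∈ K i →
      IsProxPt α (h i) ((∑ j, W i j • x (s i j k) j) - α • f' i (x k i)) (x (k + 1) i))
    (hkeep : ∀ i k, k ∉ K i → x (k + 1) i = x k i)
    -- total asynchrony
    (hKinf : ∀ i, (K i).Infinite)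
    (hstot : ∀ i j, 0 < W i j → Tendsto (fun k => s i j k) atTop atTop) :
    ∃ xstar : Fin n → EuclideanSpace ℝ (Fin d),
      (∀ i, IsProxPt α (h i) ((∑ j, W i j • xstar j) - α • f' i (xstar i)) (xstar i)) ∧
      (∀ y : Fin n → EuclideanSpace ℝ (Fin d),
        (∀ i, IsProxPt α (h i) ((∑ j, W i j • y j) - α • f' i (y i)) (y i)) → y = xstar) ∧
      Tendsto x atTop (nhds xstar) :=
  stmt11_general hWnonneg (fun i => (hWstoch i).le) hgrad hμ hsc hL hlip hh hα0 hα1 hs_le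
    (fun i k hk => by simpa only [hs_self] using hupd i k hk) hkeep hKinf hstot
end

section
/- (Theorem 2, asymptotic convergence under partial asynchrony.) Let W ∈ ℝ^{n×n} be symmetric, entrywise nonnegative, stochastic with w_{ii} > 0; let each f_i : ℝ^d → ℝ be convex with L_i-Lipschitz gradient and each h_i : ℝ^d → ℝ ∪ {+∞} proper, closed, convex; let 0 < α < 2·min_i (w_{ii}/L_i); and assume the penalized problem min_x Σ_i (f_i(x_i)+h_i(x_i)) + (1/(2α))⟨x,(I−𝐖)x⟩ has a (closed, nonempty) optimal solution set. Consider iterates x^k ∈ (ℝ^d)^n obeying the asynchronous Prox-DGD recursion (for k ∈ K_i: x_i^{k+1} = prox_{αh_i}( Σ_j w_{ij} x_j^{s_{ij}^k} − α∇f_i(x_i^k) ) with s_{ii}^k = k; otherwise x_i^{k+1} = x_i^k). Assume partial asynchrony: there exist B, D ∈ ℕ such that for every i and every k, {k,…,k+B} ∩ K_i ≠ ∅, and k − D ≤ s_{ij}^k ≤ k for all i, all j, and all k ∈ K_i. Assume further the underlying graph (edges {i,j} with w_{ij} > 0, i ≠ j) is connected. Then (x^k) converges to a fixed point x* of synchronous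 Prox-DGD, i.e., x*_i = prox_{αh_i}( Σ_j w_{ij} x*_j − α∇f_i(x*_i) ) for all i. -/
open scoped RealInnerProductSpace
open Filter

/-!
Fix a fixed point `z` of the synchronous map. Firm nonexpansiveness of the proximal map and
cocoercivity of the gradient make a step at node `i` with `α < 2 * w_ii / L_i` nonexpansive towards
`z_i` with respect to the `W`-average of squared distances, with a loss controlled by the
displacement. Hence the squared distances `‖x_i^k - z_i‖ ^ 2` form an asynchronous sub-averaging
process: in a sliding window their maximum is nonincreasing, and a value below their limit superior
stays so at its own node (`w_ii > 0`) and drags down its neighbours (`w_ij > 0`, bounded delays).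
By connectedness all the distances converge to one common limit, so the displacements vanish, every
cluster point of the iterates is a fixed point, and the distances to such a cluster point tend to
zero. A minimizer of the penalized problem supplies the initial fixed point.
-/

open Set Topology

/-! ### Averages with weights in the standard simplex -/

section Weights

variable {ι : Type*} [Fintype ι] {w : ι → ℝ}

lemma sum_mul_le_of_mem_stdSimplex (hw : w ∈ stdSimplex ℝ ι) {b : ι → ℝ} {v : ℝ}
    (hb : ∀ j, b j ≤ v) : ∑ j, w j * b j ≤ v :=
  (convex_Iic v).sum_mem (fun j _ => hw.1 j) hw.2 fun j _ => hb j

lemma mul_sub_le_sub_sum_of_mem_stdSimplex (hw : w ∈ stdSimplex ℝ ι) {b : ι → ℝ} {v : ℝ}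
    (hb : ∀ j, b j ≤ v) (i : ι) : w i * (v - b i) ≤ v - ∑ j, w j * b j := by
  calc w i * (v - b i) ≤ ∑ j, w j * (v - b j) :=
        Finset.single_le_sum (f := fun j => w j * (v - b j))
          (fun j _ => mul_nonneg (hw.1 j) (sub_nonneg.2 (hb j))) (Finset.mem_univ i)
    _ = v - ∑ j, w j * b j := by
        simp only [mul_sub, Finset.sum_sub_distrib, ← Finset.sum_mul, hw.2, one_mul]

lemma exists_pos_le_one_and_le_of_pos {κ : Type*} [Finite κ] (c : κ → ℝ) :
    ∃ η : ℝ, 0 < η ∧ η ≤ 1 ∧ ∀ q, 0 < c q → η ≤ c q := by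
  have hsmall : ∀ᶠ η in 𝓝[>] (0 : ℝ), ∀ q, 0 < c q → η ≤ c q := by
    refine eventually_all.2 fun q => ?_
    by_cases hq : 0 < c q
    · filter_upwards [Ioc_mem_nhdsGT hq] with η hη _ using hη.2
    · exact Eventually.of_forall fun η hpos => absurd hpos hq
  have hunit : ∀ᶠ η in 𝓝[>] (0 : ℝ), η ∈ Ioc 0 1 := Ioc_mem_nhdsGT one_pos
  obtain ⟨η, hη, hη_le⟩ := (hunit.and hsmall).exists
  exact ⟨η, hη.1, hη.2, hη_le⟩

end Weights

/-! ### Asynchronous averaging of real numbers -/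

/-- Partial asynchrony: agent `i` is active at the times in `K i`, at least once in any `B + 1`
consecutive steps. When active at time `k` it reads the state that agent `j` had at time
`s i j k`, which is at most `D` steps old and up to date for `j = i`. The delays at inactive times
are irrelevant and unconstrained. -/
structure PartiallyAsynchronous {ι : Type*} (K : ι → Set ℕ) (s : ι → ι → ℕ → ℕ) (B D : ℕ) :
    Prop where
  exists_active : ∀ i k, ∃ l, k ≤ l ∧ l ≤ k + B ∧ l ∈ K i
  le_time : ∀ i j, ∀ k ∈ K i, s i j k ≤ k
  time_le : ∀ i j, ∀ k ∈ K i, k ≤ s i j k + D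
  self_eq : ∀ i, ∀ k ∈ K i, s i i k = k

/-- Real states `a k i` such that an active agent moves to at most the `W`-average of the values it
reads, and an inactive one does not increase. The squared distances of an asynchronous orbit to a
fixed point have this property. -/
structure IsAsyncSubaverage {ι : Type*} [Fintype ι] (W : ι → ι → ℝ) (K : ι → Set ℕ)
    (s : ι → ι → ℕ → ℕ) (a : ℕ → ι → ℝ) : Prop where
  active_le : ∀ i, ∀ k ∈ K i, a (k + 1) i ≤ ∑ j, W i j * a (s i j k) j
  inactive_le : ∀ i, ∀ k ∉ K i, a (k + 1) i ≤ a k i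

/-- A value that dropped below the limit superior infinitely often would pull all later values
strictly below it. -/
lemma exists_tendsto_of_gap_spreads {ι : Type*} {a : ℕ → ι → ℝ} {D T : ℕ} {q lower upper : ℝ}
    (hq : 0 < q) (hlower : ∀ k i, lower ≤ a k i) (hupper : ∀ k i, a k i ≤ upper)
    (hgap : ∀ k v, (∀ t, k ≤ t + D → ∀ j, a t j ≤ v) →
      ∀ i j t, k + T ≤ t → q * (v - a k i) ≤ v - a t j) :
    ∃ M, ∀ i, Tendsto (fun k => a k i) atTop (𝓝 M) := by
  set S : Set ℝ := {v | ∀ᶠ k in atTop, ∀ i, a k i ≤ v}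
  have hne : S.Nonempty := ⟨upper, Eventually.of_forall hupper⟩
  refine ⟨sInf S, fun i => tendsto_order.2 ⟨fun b hb => ?_, fun b hb => ?_⟩⟩
  · have hbdd : BddBelow S := by
      refine ⟨lower, fun v hv => ?_⟩
      obtain ⟨k, hk⟩ := hv.exists
      exact (hlower k i).trans (hk i)
    set ε := q * (sInf S - b)
    have hε_pos : 0 < ε := mul_pos hq (sub_pos.2 hb)
    obtain ⟨v, hvS, hv⟩ := exists_lt_of_csInf_lt hne (lt_add_of_pos_right (sInf S) hε_pos)
    obtain ⟨k₀, hk₀⟩ := eventually_atTop.1 hvS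
    filter_upwards [eventually_ge_atTop (k₀ + D)] with k hk
    by_contra! hab
    have hlow : v - q * (v - a k i) ∈ S := by
      filter_upwards [eventually_ge_atTop (k + T)] with t ht j
      linarith [hgap k v (fun t ht j => hk₀ t (by omega) j) i j t ht]
    have hgap_large : q * (sInf S - b) ≤ q * (v - a k i) :=
      mul_le_mul_of_nonneg_left (by linarith [csInf_le hbdd hvS]) hq.le
    linarith [csInf_le hbdd hlow]
  · obtain ⟨v, hvS, hv⟩ := exists_lt_of_csInf_lt hne hb
    filter_upwards [hvS] with k hk using (hk i).trans_lt hv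

namespace IsAsyncSubaverage

variable {ι : Type*} [Fintype ι] {W : ι → ι → ℝ} {K : ι → Set ℕ} {s : ι → ι → ℕ → ℕ} {B D : ℕ}
  {a : ℕ → ι → ℝ}

lemma le_of_le_on_window (ha : IsAsyncSubaverage W K s a) (hW : ∀ i, W i ∈ stdSimplex ℝ ι)
    (hs : PartiallyAsynchronous K s B D) {k : ℕ} {v : ℝ}
    (hv : ∀ t, k ≤ t → t ≤ k + D → ∀ i, a t i ≤ v) : ∀ t, k ≤ t → ∀ i, a t i ≤ v := by
  intro t
  induction t using Nat.strong_induction_on with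
  | _ t ih =>
    intro hkt i
    by_cases htD : t ≤ k + D
    · exact hv t hkt htD i
    obtain ⟨t, rfl⟩ : ∃ r, t = r + 1 := ⟨t - 1, by omega⟩
    by_cases hactive : t ∈ K i
    · refine (ha.active_le i t hactive).trans (sum_mul_le_of_mem_stdSimplex (hW i) fun j => ?_)
      have hle := hs.le_time i j t hactive
      have hge := hs.time_le i j t hactive
      exact ih _ (by omega) (by omega) j
    · exact (ha.inactive_le i t hactive).trans (ih t (by omega) (by omega) i)

lemma exists_upper_bound (ha : IsAsyncSubaverage W K s a) (hW : ∀ i, W i ∈ stdSimplex ℝ ι)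
    (hs : PartiallyAsynchronous K s B D) : ∃ b, ∀ k i, a k i ≤ b := by
  obtain ⟨b, hb⟩ := (Set.finite_range fun q : Finset.range (D + 1) × ι => a q.1 q.2).bddAbove
  refine ⟨b, fun k => ha.le_of_le_on_window hW hs (k := 0) (fun t _ ht i => ?_) k k.zero_le⟩
  exact hb ⟨(⟨t, Finset.mem_range.2 (by omega)⟩, i), rfl⟩

lemma mul_gap_le_gap_succ (ha : IsAsyncSubaverage W K s a) (hW : ∀ i, W i ∈ stdSimplex ℝ ι)
    (hs : PartiallyAsynchronous K s B D) {i : ι} {k : ℕ} (hk : k ∈ K i) {v : ℝ}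
    (hv : ∀ t, k ≤ t + D → ∀ j, a t j ≤ v) (j : ι) :
    W i j * (v - a (s i j k) j) ≤ v - a (k + 1) i :=
  (mul_sub_le_sub_sum_of_mem_stdSimplex (hW i)
    (fun m => hv _ (hs.time_le i m k hk) m) j).trans (by linarith [ha.active_le i k hk])

lemma pow_mul_gap_le_gap_add (ha : IsAsyncSubaverage W K s a) (hW : ∀ i, W i ∈ stdSimplex ℝ ι)
    (hs : PartiallyAsynchronous K s B D) {η : ℝ} (hη₀ : 0 ≤ η) (hη₁ : η ≤ 1) {i : ι}
    (hηi : η ≤ W i i) {k : ℕ} {v : ℝ} (hv : ∀ t, k ≤ t + D → ∀ j, a t j ≤ v) (r : ℕ) :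
    η ^ r * (v - a k i) ≤ v - a (k + r) i := by
  induction r with
  | zero => simp
  | succ r ih =>
    have hgap : 0 ≤ v - a (k + r) i := sub_nonneg.2 (hv _ (by omega) i)
    have hstep : η * (v - a (k + r) i) ≤ v - a (k + r + 1) i := by
      by_cases hactive : k + r ∈ K i
      · have hself := ha.mul_gap_le_gap_succ hW hs hactive (fun t ht => hv t (by omega)) i
        rw [hs.self_eq i _ hactive] at hself
        exact (mul_le_mul_of_nonneg_right hηi hgap).trans hself
      · linarith [mul_le_of_le_one_left hgap hη₁, ha.inactive_le i _ hactive]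
    calc η ^ (r + 1) * (v - a k i) = η * (η ^ r * (v - a k i)) := by ring
      _ ≤ η * (v - a (k + r) i) := mul_le_mul_of_nonneg_left ih hη₀
      _ ≤ v - a (k + (r + 1)) i := hstep

lemma gap_spreads_to_neighbor (ha : IsAsyncSubaverage W K s a) (hW : ∀ i, W i ∈ stdSimplex ℝ ι)
    (hs : PartiallyAsynchronous K s B D) {η : ℝ} (hη₀ : 0 ≤ η) (hη₁ : η ≤ 1) {i m : ι}
    (hηii : η ≤ W i i) (hηim : η ≤ W i m) {k T : ℕ} {v g : ℝ} (hg : 0 ≤ g)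
    (hv : ∀ t, k ≤ t + D → ∀ j, a t j ≤ v) (hm : ∀ r, T ≤ r → η ^ r * g ≤ v - a (k + r) m)
    {r : ℕ} (hr : T + D + B + 1 ≤ r) : η ^ r * g ≤ v - a (k + r) i := by
  obtain ⟨l, hl_ge, hl_le, hl⟩ := hs.exists_active i (k + T + D)
  have hread_le := hs.le_time i m l hl
  have hread_ge := hs.time_le i m l hl
  obtain ⟨p, hp⟩ : ∃ p, s i m l = k + p := ⟨s i m l - k, by omega⟩
  obtain ⟨e, he⟩ : ∃ e, k + r = l + 1 + e := ⟨k + r - (l + 1), by omega⟩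
  have hgap : 0 ≤ v - a (s i m l) m := sub_nonneg.2 (hv _ (by omega) m)
  have hread : η ^ p * g ≤ v - a (s i m l) m := hp ▸ hm p (by omega)
  calc η ^ r * g ≤ η ^ (e + 1 + p) * g :=
        mul_le_mul_of_nonneg_right (pow_le_pow_of_le_one hη₀ hη₁ (by omega)) hg
    _ = η ^ e * (η * (η ^ p * g)) := by ring
    _ ≤ η ^ e * (η * (v - a (s i m l) m)) := by gcongr
    _ ≤ η ^ e * (W i m * (v - a (s i m l) m)) := by gcongr
    _ ≤ η ^ e * (v - a (l + 1) i) := by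
        gcongr
        exact ha.mul_gap_le_gap_succ hW hs hl (fun t ht => hv t (by omega)) m
    _ ≤ v - a (k + r) i := by
        rw [he]
        exact ha.pow_mul_gap_le_gap_add hW hs hη₀ hη₁ hηii (fun t ht => hv t (by omega)) e

lemma gap_spreads_along_path (ha : IsAsyncSubaverage W K s a) (hW : ∀ i, W i ∈ stdSimplex ℝ ι)
    (hdiag : ∀ i, 0 < W i i) (hs : PartiallyAsynchronous K s B D) {η : ℝ} (hη₀ : 0 ≤ η)
    (hη₁ : η ≤ 1) (hη : ∀ i j, 0 < W i j → η ≤ W i j) {i j : ι}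
    (hpath : Relation.ReflTransGen (fun i j => 0 < W i j) j i) :
    ∃ T, ∀ k v, (∀ t, k ≤ t + D → ∀ m, a t m ≤ v) →
      ∀ r, T ≤ r → η ^ r * (v - a k i) ≤ v - a (k + r) j := by
  induction hpath using Relation.ReflTransGen.head_induction_on with
  | refl =>
    exact ⟨0, fun k v hv r _ => ha.pow_mul_gap_le_gap_add hW hs hη₀ hη₁ (hη i i (hdiag i)) hv r⟩
  | head hedge _ ih =>
    obtain ⟨T, hT⟩ := ih
    exact ⟨T + D + B + 1, fun k v hv r hr => ha.gap_spreads_to_neighbor hW hs hη₀ hη₁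
      (hη _ _ (hdiag _)) (hη _ _ hedge) (sub_nonneg.2 (hv k (by omega) i)) hv (hT k v hv) hr⟩

lemma gap_spreads (ha : IsAsyncSubaverage W K s a) (hW : ∀ i, W i ∈ stdSimplex ℝ ι)
    (hdiag : ∀ i, 0 < W i i) (hconn : ∀ i j, Relation.ReflTransGen (fun i j => 0 < W i j) i j)
    (hs : PartiallyAsynchronous K s B D) :
    ∃ q > 0, ∃ T, ∀ k v, (∀ t, k ≤ t + D → ∀ j, a t j ≤ v) →
      ∀ i j t, k + T ≤ t → q * (v - a k i) ≤ v - a t j := by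
  obtain ⟨η, hη₀, hη₁, hη⟩ := exists_pos_le_one_and_le_of_pos fun q : ι × ι => W q.1 q.2
  choose T hT using fun q : ι × ι =>
    ha.gap_spreads_along_path hW hdiag hs hη₀.le hη₁ (fun i j => hη (i, j)) (hconn q.2 q.1)
  obtain ⟨T', hT'⟩ := (Set.finite_range T).bddAbove
  refine ⟨η ^ (T' + D), pow_pos hη₀ _, T', fun k v hv i j t ht => ?_⟩
  have hwindow : ∀ t, k + T' ≤ t → t ≤ k + T' + D → ∀ j,
      a t j ≤ v - η ^ (T' + D) * (v - a k i) := by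
    intro t ht_ge ht_le j
    obtain ⟨r, rfl⟩ : ∃ r, t = k + r := ⟨t - k, by omega⟩
    have hTr : T (i, j) ≤ r := (hT' ⟨(i, j), rfl⟩).trans (by omega)
    have hpow : η ^ (T' + D) * (v - a k i) ≤ η ^ r * (v - a k i) :=
      mul_le_mul_of_nonneg_right (pow_le_pow_of_le_one hη₀.le hη₁ (by omega))
        (sub_nonneg.2 (hv k (by omega) i))
    linarith [hT (i, j) k v hv r hTr]
  linarith [ha.le_of_le_on_window hW hs hwindow t ht j]

theorem exists_tendsto (ha : IsAsyncSubaverage W K s a) (hW : ∀ i, W i ∈ stdSimplex ℝ ι)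
    (hdiag : ∀ i, 0 < W i i) (hconn : ∀ i j, Relation.ReflTransGen (fun i j => 0 < W i j) i j)
    (hs : PartiallyAsynchronous K s B D) {lower : ℝ} (hlower : ∀ k i, lower ≤ a k i) :
    ∃ M, ∀ i, Tendsto (fun k => a k i) atTop (𝓝 M) := by
  obtain ⟨q, hq, T, hgap⟩ := ha.gap_spreads hW hdiag hconn hs
  obtain ⟨upper, hupper⟩ := ha.exists_upper_bound hW hs
  exact exists_tendsto_of_gap_spreads hq hlower hupper hgap

end IsAsyncSubaverage

/-! ### Asynchronous iterations of strongly attracting maps -/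

/-- `x` is an orbit of the asynchronous iteration of the relations `T i`, where `T i y p` means that
agent `i` may move to `p` after reading the states `y`. Relations rather than functions are used
because a proximal point is specified, not computed. -/
structure IsAsyncOrbit {ι X : Type*} (T : ι → (ι → X) → X → Prop) (K : ι → Set ℕ)
    (s : ι → ι → ℕ → ℕ) (x : ℕ → ι → X) : Prop where
  active : ∀ i, ∀ k ∈ K i, T i (fun j => x (s i j k) j) (x (k + 1) i)
  inactive : ∀ i, ∀ k ∉ K i, x (k + 1) i = x k i

/-- Strong attraction in the `w`-averaged form suited to asynchrony: the squared distance of the new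
state `p` of agent `i` to a fixed tuple `z` is at most the `w`-average of the squared distances of
the states read, with a decrease controlled by the displacement `dist p (y i)`. -/
def IsStronglyAttracting {ι X : Type*} [Fintype ι] [PseudoMetricSpace X] (w : ι → ℝ) (i : ι)
    (T : (ι → X) → X → Prop) : Prop :=
  ∃ c > 0, ∀ y p z, T y p → T z (z i) →
    c * dist p (y i) ^ 2 + dist p (z i) ^ 2 ≤ ∑ j, w j * dist (y j) (z j) ^ 2

section BoundedLag

variable {X β : Type*} [PseudoMetricSpace X] {F : Filter β} {y : ℕ → X}

lemma tendsto_dist_of_le_add (hy : Tendsto (fun k => dist (y k) (y (k + 1))) atTop (𝓝 0)) (C : ℕ)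
    {m l : β → ℕ} (hm : Tendsto m F atTop) (hml : ∀ᶠ b in F, m b ≤ l b)
    (hlm : ∀ᶠ b in F, l b ≤ m b + C) : Tendsto (fun b => dist (y (m b)) (y (l b))) F (𝓝 0) := by
  have hsum : Tendsto (fun b => ∑ t ∈ Finset.range C, dist (y (m b + t)) (y (m b + t + 1))) F
      (𝓝 0) := by
    simpa only [Finset.sum_const_zero, Function.comp_apply] using tendsto_finsetSum (Finset.range C)
      fun t _ => (hy.comp (tendsto_add_atTop_nat t)).comp hm
  refine squeeze_zero' (Eventually.of_forall fun b => dist_nonneg) ?_ hsum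
  filter_upwards [hml, hlm] with b hml hlm
  calc dist (y (m b)) (y (l b)) ≤ ∑ t ∈ Finset.Ico (m b) (l b), dist (y t) (y (t + 1)) :=
        dist_le_Ico_sum_dist y hml
    _ ≤ ∑ t ∈ Finset.Ico (m b) (m b + C), dist (y t) (y (t + 1)) :=
        Finset.sum_le_sum_of_subset_of_nonneg (Finset.Ico_subset_Ico_right hlm)
          fun _ _ _ => dist_nonneg
    _ = ∑ t ∈ Finset.range C, dist (y (m b + t)) (y (m b + t + 1)) := by
        rw [Finset.sum_Ico_eq_sum_range, Nat.add_sub_cancel_left]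

lemma tendsto_of_bounded_lag (hy : Tendsto (fun k => dist (y k) (y (k + 1))) atTop (𝓝 0)) (C : ℕ)
    {φ l : β → ℕ} (hφ : Tendsto φ F atTop) (hφl : ∀ᶠ b in F, φ b ≤ l b + C)
    (hlφ : ∀ᶠ b in F, l b ≤ φ b + C) {z : X} (hz : Tendsto (fun b => y (φ b)) F (𝓝 z)) :
    Tendsto (fun b => y (l b)) F (𝓝 z) := by
  have hm : Tendsto (fun b => φ b - C) F atTop := (tendsto_sub_atTop_nat C).comp hφ
  have hdist_φ : Tendsto (fun b => dist (y (φ b - C)) (y (φ b))) F (𝓝 0) :=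
    tendsto_dist_of_le_add hy C hm (Eventually.of_forall fun b => by omega)
      (Eventually.of_forall fun b => by omega)
  have hdist_l : Tendsto (fun b => dist (y (φ b - C)) (y (l b))) F (𝓝 0) :=
    tendsto_dist_of_le_add hy (2 * C) hm (hφl.mono fun b hb => by omega)
      (hlφ.mono fun b hb => by omega)
  have hz' : Tendsto (fun b => y (φ b - C)) F (𝓝 z) :=
    hz.congr_dist (by simpa only [dist_comm] using hdist_φ)
  exact hz'.congr_dist hdist_l

end BoundedLag

lemma exists_tendsto_subseq_of_tendsto_dist_sq {ι X : Type*} [Finite ι] [PseudoMetricSpace X]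
    [ProperSpace X] {x : ℕ → ι → X} {z : ι → X} {M : ℝ}
    (hM : ∀ i, Tendsto (fun k => dist (x k i) (z i) ^ 2) atTop (𝓝 M)) :
    ∃ xstar, ∃ φ : ℕ → ℕ, StrictMono φ ∧ Tendsto (x ∘ φ) atTop (𝓝 xstar) := by
  cases nonempty_fintype ι
  have hball : ∀ᶠ k in atTop, x k ∈ Metric.closedBall z √(M + 1) := by
    have hsq : ∀ᶠ k in atTop, ∀ i, dist (x k i) (z i) ^ 2 ≤ M + 1 :=
      eventually_all.2 fun i => (hM i).eventually_le_const (lt_add_one M)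
    filter_upwards [hsq] with k hk
    exact (dist_pi_le_iff (Real.sqrt_nonneg _)).2 fun i => Real.le_sqrt_of_sq_le (hk i)
  obtain ⟨xstar, -, φ, hφ, hlim⟩ :=
    tendsto_subseq_of_frequently_bounded Metric.isBounded_closedBall hball.frequently
  exact ⟨xstar, φ, hφ, hlim⟩

namespace PartiallyAsynchronous

variable {ι : Type*} {K : ι → Set ℕ} {s : ι → ι → ℕ → ℕ} {B D : ℕ}

lemma tendsto_time (hs : PartiallyAsynchronous K s B D) (i j : ι) :
    Tendsto (s i j) (atTop ⊓ 𝓟 (K i)) atTop := by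
  refine tendsto_atTop_mono' _ ?_ ((tendsto_sub_atTop_nat D).mono_left inf_le_left)
  filter_upwards [mem_inf_of_right (mem_principal_self (K i))] with k hk
  have := hs.time_le i j k hk
  omega

end PartiallyAsynchronous

namespace IsAsyncOrbit

variable {ι X : Type*} [PseudoMetricSpace X] {T : ι → (ι → X) → X → Prop} {K : ι → Set ℕ}
  {s : ι → ι → ℕ → ℕ} {B D : ℕ} {x : ℕ → ι → X}

lemma fixed_of_tendsto_subseq (hx : IsAsyncOrbit T K s x) (hs : PartiallyAsynchronous K s B D)
    (hclosed : ∀ i, IsClosed {q : (ι → X) × X | T i q.1 q.2})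
    (hstep : ∀ i, Tendsto (fun k => dist (x k i) (x (k + 1) i)) atTop (𝓝 0)) {φ : ℕ → ℕ}
    (hφ : Tendsto φ atTop atTop) {z : ι → X} (hz : Tendsto (x ∘ φ) atTop (𝓝 z)) (i : ι) :
    T i z (z i) := by
  have hzj : ∀ j, Tendsto (fun k => x (φ k) j) atTop (𝓝 (z j)) := tendsto_pi_nhds.1 hz
  choose l hφl hlφ hl using fun k => hs.exists_active i (φ k)
  have hread : ∀ j, Tendsto (fun k => x (s i j (l k)) j) atTop (𝓝 (z j)) := fun j => by
    have hle k := hs.le_time i j (l k) (hl k)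
    have hge k := hs.time_le i j (l k) (hl k)
    exact tendsto_of_bounded_lag (y := fun k => x k j) (hstep j) (B + D) hφ
      (Eventually.of_forall fun k => by have := hφl k; have := hge k; omega)
      (Eventually.of_forall fun k => by have := hlφ k; have := hle k; omega) (hzj j)
  have hmove : Tendsto (fun k => x (l k + 1) i) atTop (𝓝 (z i)) :=
    tendsto_of_bounded_lag (y := fun k => x k i) (hstep i) (B + 1) hφ
      (Eventually.of_forall fun k => by have := hφl k; omega)
      (Eventually.of_forall fun k => by have := hlφ k; omega) (hzj i)
  exact (hclosed i).mem_of_tendsto ((tendsto_pi_nhds.2 hread).prodMk_nhds hmove)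
    (Eventually.of_forall fun k => hx.active i (l k) (hl k))

variable [Fintype ι] {W : ι → ι → ℝ}

lemma isAsyncSubaverage_dist_sq (hx : IsAsyncOrbit T K s x)
    (hT : ∀ i, IsStronglyAttracting (W i) i (T i)) {z : ι → X} (hz : ∀ i, T i z (z i)) :
    IsAsyncSubaverage W K s fun k i => dist (x k i) (z i) ^ 2 where
  active_le i k hk := by
    obtain ⟨c, hc, hattract⟩ := hT i
    exact (le_add_of_nonneg_left (by positivity)).trans (hattract _ _ z (hx.active i k hk) (hz i))
  inactive_le i k hk := by rw [hx.inactive i k hk]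

lemma tendsto_dist_succ_of_tendsto_dist_sq (hx : IsAsyncOrbit T K s x)
    (hs : PartiallyAsynchronous K s B D) (hW : ∀ i, W i ∈ stdSimplex ℝ ι)
    (hT : ∀ i, IsStronglyAttracting (W i) i (T i)) {z : ι → X} (hz : ∀ i, T i z (z i)) {M : ℝ}
    (hM : ∀ i, Tendsto (fun k => dist (x k i) (z i) ^ 2) atTop (𝓝 M)) (i : ι) :
    Tendsto (fun k => dist (x k i) (x (k + 1) i)) atTop (𝓝 0) := by
  obtain ⟨c, hc, hattract⟩ := hT i
  have hdecrease : Tendsto (fun k => ((∑ j, W i j * dist (x (s i j k) j) (z j) ^ 2)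
      - dist (x (k + 1) i) (z i) ^ 2) / c) (atTop ⊓ 𝓟 (K i)) (𝓝 0) := by
    have hread : Tendsto (fun k => ∑ j, W i j * dist (x (s i j k) j) (z j) ^ 2)
        (atTop ⊓ 𝓟 (K i)) (𝓝 (∑ j, W i j * M)) :=
      tendsto_finsetSum _ fun j _ => ((hM j).comp (hs.tendsto_time i j)).const_mul _
    have hmove := ((hM i).comp (tendsto_add_atTop_nat 1)).mono_left
      (inf_le_left (b := 𝓟 (K i)))
    simpa [← Finset.sum_mul, (hW i).2] using (hread.sub hmove).div_const c
  have hactive_sq : Tendsto (fun k => dist (x k i) (x (k + 1) i) ^ 2) (atTop ⊓ 𝓟 (K i)) (𝓝 0) := by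
    refine squeeze_zero' (Eventually.of_forall fun k => sq_nonneg _) ?_ hdecrease
    filter_upwards [mem_inf_of_right (mem_principal_self (K i))] with k hk
    have hmoved := hattract _ _ z (hx.active i k hk) (hz i)
    rw [hs.self_eq i k hk, dist_comm (x (k + 1) i) (x k i)] at hmoved
    rw [le_div_iff₀' hc]
    linarith
  have hactive : Tendsto (fun k => dist (x k i) (x (k + 1) i)) (atTop ⊓ 𝓟 (K i)) (𝓝 0) := by
    simpa [Real.sqrt_sq dist_nonneg] using hactive_sq.sqrt
  have hinactive : Tendsto (fun k => dist (x k i) (x (k + 1) i)) (atTop ⊓ 𝓟 (K i)ᶜ) (𝓝 0) := by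
    refine tendsto_const_nhds.congr' ?_
    filter_upwards [mem_inf_of_right (mem_principal_self (K i)ᶜ)] with k hk
    rw [hx.inactive i k hk, dist_self]
  classical simpa only [Set.piecewise_same] using hactive.piecewise hinactive

lemma exists_tendsto_dist_sq (hx : IsAsyncOrbit T K s x) (hs : PartiallyAsynchronous K s B D)
    (hW : ∀ i, W i ∈ stdSimplex ℝ ι) (hdiag : ∀ i, 0 < W i i)
    (hconn : ∀ i j, Relation.ReflTransGen (fun i j => 0 < W i j) i j)
    (hT : ∀ i, IsStronglyAttracting (W i) i (T i)) {z : ι → X} (hz : ∀ i, T i z (z i)) :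
    ∃ M, ∀ i, Tendsto (fun k => dist (x k i) (z i) ^ 2) atTop (𝓝 M) :=
  (hx.isAsyncSubaverage_dist_sq hT hz).exists_tendsto hW hdiag hconn hs fun _ _ => sq_nonneg _

theorem exists_tendsto_fixed [ProperSpace X] (hx : IsAsyncOrbit T K s x)
    (hs : PartiallyAsynchronous K s B D) (hW : ∀ i, W i ∈ stdSimplex ℝ ι)
    (hdiag : ∀ i, 0 < W i i) (hconn : ∀ i j, Relation.ReflTransGen (fun i j => 0 < W i j) i j)
    (hT : ∀ i, IsStronglyAttracting (W i) i (T i))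
    (hclosed : ∀ i, IsClosed {q : (ι → X) × X | T i q.1 q.2}) (hfix : ∃ z, ∀ i, T i z (z i)) :
    ∃ xstar, (∀ i, T i xstar (xstar i)) ∧ Tendsto x atTop (𝓝 xstar) := by
  obtain ⟨z, hz⟩ := hfix
  obtain ⟨M, hM⟩ := hx.exists_tendsto_dist_sq hs hW hdiag hconn hT hz
  obtain ⟨xstar, φ, hφ, hlim⟩ := exists_tendsto_subseq_of_tendsto_dist_sq hM
  have hstar : ∀ i, T i xstar (xstar i) := hx.fixed_of_tendsto_subseq hs hclosed
    (hx.tendsto_dist_succ_of_tendsto_dist_sq hs hW hT hz hM) hφ.tendsto_atTop hlim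
  obtain ⟨R, hR⟩ := hx.exists_tendsto_dist_sq hs hW hdiag hconn hT hstar
  refine ⟨xstar, hstar, tendsto_pi_nhds.2 fun i => tendsto_iff_dist_tendsto_zero.2 ?_⟩
  have hsubseq : Tendsto (fun k => dist (x (φ k) i) (xstar i) ^ 2) atTop (𝓝 0) := by
    simpa using (tendsto_iff_dist_tendsto_zero.1 (tendsto_pi_nhds.1 hlim i)).pow 2
  have hR₀ : R = 0 := tendsto_nhds_unique ((hR i).comp hφ.tendsto_atTop) hsubseq
  simpa [Real.sqrt_sq dist_nonneg, hR₀] using (hR i).sqrt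

end IsAsyncOrbit

/-! ### Forward-backward steps after averaging -/

/-- The relation `J`, with `J u p` meaning that `p` is a value at `u`, is firmly nonexpansive.
Proximal maps are the instances of interest. -/
def IsFirmlyNonexpansive {E : Type*} [NormedAddCommGroup E] (J : E → E → Prop) : Prop :=
  ∀ u p v q, J u p → J v q → ‖p - q‖ ^ 2 + ‖(u - v) - (p - q)‖ ^ 2 ≤ ‖u - v‖ ^ 2

/-- `F` is `γ`-cocoercive. Gradients of convex `1 / γ`-smooth functions are the instances of
interest. -/
def IsCocoercive {E : Type*} [NormedAddCommGroup E] [InnerProductSpace ℝ E] (γ : ℝ) (F : E → E) :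
    Prop :=
  ∀ x y, γ * ‖F x - F y‖ ^ 2 ≤ ⟪x - y, F x - F y⟫

/-- The synchronous step of agent `i`: average the states `y` with the weights `w`, move along `-F`
with step size `α`, then apply `J`. With `J` a proximal map and `F` a gradient this is one step of
Prox-DGD. -/
def IsForwardBackwardStep {ι E : Type*} [Fintype ι] [AddCommGroup E] [Module ℝ E]
    (J : E → E → Prop) (F : E → E) (w : ι → ℝ) (α : ℝ) (i : ι) (y : ι → E) (p : E) : Prop :=
  J ((∑ j, w j • y j) - α • F (y i)) p

lemma sum_apply_update {ι X M : Type*} [Fintype ι] [DecidableEq ι] [AddCommGroup M]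
    (φ : ι → X → M) (e : ι → X) (i : ι) (v : X) :
    ∑ j, φ j (Function.update e i v j) = ∑ j, φ j (e j) + (φ i v - φ i (e i)) := by
  have herase : ∑ j ∈ Finset.univ.erase i, φ j (Function.update e i v j) =
      ∑ j ∈ Finset.univ.erase i, φ j (e j) :=
    Finset.sum_congr rfl fun j hj => by rw [Function.update_of_ne (Finset.ne_of_mem_erase hj)]
  rw [← Finset.add_sum_erase _ _ (Finset.mem_univ i), herase, Function.update_self,
    ← Finset.add_sum_erase Finset.univ (fun j => φ j (e j)) (Finset.mem_univ i)]
  abel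

lemma exists_pos_mul_norm_add₃_sq_le {E : Type*} [SeminormedAddCommGroup E] {p q r : ℝ}
    (hp : 0 < p) (hq : 0 < q) (hr : 0 < r) :
    ∃ c > 0, ∀ a b d : E,
      c * ‖a + b + d‖ ^ 2 ≤ p * ‖a‖ ^ 2 + q * ‖b‖ ^ 2 + r * ‖d‖ ^ 2 := by
  set m := min p (min q r)
  have hm : 0 < m / 3 := div_pos (lt_min hp (lt_min hq hr)) three_pos
  refine ⟨m / 3, hm, fun a b d => ?_⟩
  have hsq : ‖a + b + d‖ ^ 2 ≤ 3 * (‖a‖ ^ 2 + ‖b‖ ^ 2 + ‖d‖ ^ 2) := by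
    have := pow_le_pow_left₀ (norm_nonneg _) (norm_add₃_le (a := a) (b := b) (c := d)) 2
    nlinarith [sq_nonneg (‖a‖ - ‖b‖), sq_nonneg (‖b‖ - ‖d‖), sq_nonneg (‖a‖ - ‖d‖)]
  calc m / 3 * ‖a + b + d‖ ^ 2 ≤ m / 3 * (3 * (‖a‖ ^ 2 + ‖b‖ ^ 2 + ‖d‖ ^ 2)) :=
        mul_le_mul_of_nonneg_left hsq hm.le
    _ = m * ‖a‖ ^ 2 + m * ‖b‖ ^ 2 + m * ‖d‖ ^ 2 := by ring
    _ ≤ p * ‖a‖ ^ 2 + q * ‖b‖ ^ 2 + r * ‖d‖ ^ 2 := by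
        gcongr
        · exact min_le_left _ _
        · exact (min_le_right _ _).trans (min_le_left _ _)
        · exact (min_le_right _ _).trans (min_le_right _ _)

section ForwardBackward

variable {ι E : Type*} [Fintype ι] [NormedAddCommGroup E] [InnerProductSpace ℝ E]

lemma norm_sum_smul_sq_add_le_of_mem_stdSimplex {w : ι → ℝ} (hw : w ∈ stdSimplex ℝ ι) (e : ι → E)
    (i : ι) :
    ‖∑ j, w j • e j‖ ^ 2 + w i * ‖e i - ∑ j, w j • e j‖ ^ 2 ≤ ∑ j, w j * ‖e j‖ ^ 2 := by
  set u := ∑ j, w j • e j with hu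
  have hvariance : ∑ j, w j * ‖e j - u‖ ^ 2 = ∑ j, w j * ‖e j‖ ^ 2 - ‖u‖ ^ 2 := by
    have hexpand : ∀ j, w j * ‖e j - u‖ ^ 2 =
        w j * ‖e j‖ ^ 2 - 2 * ⟪w j • e j, u⟫ + w j * ‖u‖ ^ 2 := fun j => by
      rw [norm_sub_sq_real, real_inner_smul_left]
      ring
    simp only [hexpand, Finset.sum_add_distrib, Finset.sum_sub_distrib, ← Finset.mul_sum,
      ← sum_inner, ← Finset.sum_mul, hw.2, ← hu, real_inner_self_eq_norm_sq]
    ring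
  have hterm : w i * ‖e i - u‖ ^ 2 ≤ ∑ j, w j * ‖e j - u‖ ^ 2 :=
    Finset.single_le_sum (f := fun j => w j * ‖e j - u‖ ^ 2)
      (fun j _ => mul_nonneg (hw.1 j) (sq_nonneg _)) (Finset.mem_univ i)
  linarith

lemma norm_sum_smul_sub_smul_sq_add_le {w : ι → ℝ} (hw : w ∈ stdSimplex ℝ ι) (e : ι → E) (i : ι)
    {v : E} {r : ℝ} (hv : ‖e i - v‖ ^ 2 + r * ‖v‖ ^ 2 ≤ ‖e i‖ ^ 2) :
    ‖∑ j, w j • e j - w i • v‖ ^ 2 + w i * ‖e i - v - (∑ j, w j • e j - w i • v)‖ ^ 2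
      + w i * r * ‖v‖ ^ 2 ≤ ∑ j, w j * ‖e j‖ ^ 2 := by
  classical
  have hmean : ∑ j, w j • Function.update e i (e i - v) j = ∑ j, w j • e j - w i • v := by
    rw [sum_apply_update (fun j z => w j • z), smul_sub]
    abel
  have hvariance := norm_sum_smul_sq_add_le_of_mem_stdSimplex hw (Function.update e i (e i - v)) i
  rw [hmean, Function.update_self, sum_apply_update (fun j z => w j * ‖z‖ ^ 2)] at hvariance
  linarith [mul_le_mul_of_nonneg_left hv (hw.1 i)]

namespace IsCocoercive

variable {γ : ℝ} {F : E → E}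

lemma continuous (hF : IsCocoercive γ F) (hγ : 0 < γ) : Continuous F := by
  refine (LipschitzWith.of_dist_le_mul (K := γ⁻¹.toNNReal) fun x y => ?_).continuous
  rw [dist_eq_norm, dist_eq_norm, Real.coe_toNNReal _ (inv_nonneg.2 hγ.le), inv_mul_eq_div,
    le_div_iff₀' hγ]
  rcases (norm_nonneg (F x - F y)).eq_or_lt with hzero | hpos
  · simp [← hzero]
  · refine le_of_mul_le_mul_right ?_ hpos
    linarith [hF x y, real_inner_le_norm (x - y) (F x - F y)]

lemma norm_sub_smul_sq_add_le (hF : IsCocoercive γ F) {β : ℝ} (hβ : 0 < β) (x y : E) :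
    ‖x - y - β • (F x - F y)‖ ^ 2 + (2 * γ / β - 1) * ‖β • (F x - F y)‖ ^ 2 ≤ ‖x - y‖ ^ 2 := by
  have hexpand : ‖x - y - β • (F x - F y)‖ ^ 2 + (2 * γ / β - 1) * ‖β • (F x - F y)‖ ^ 2 =
      ‖x - y‖ ^ 2 - 2 * β * (⟪x - y, F x - F y⟫ - γ * ‖F x - F y‖ ^ 2) := by
    rw [norm_sub_sq_real, real_inner_smul_right, norm_smul, mul_pow, Real.norm_of_nonneg hβ.le]
    field_simp
    ring
  have := mul_nonneg (by positivity : 0 ≤ 2 * β) (sub_nonneg.2 (hF x y))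
  linarith

end IsCocoercive

variable {J : E → E → Prop} {F : E → E} {γ α : ℝ} {w : ι → ℝ} {i : ι}

/-- Writing `α • F = w i • β • F` with `β = α / w i`, the forward step is a `w`-average in which
only `y i` is replaced by its own forward step of size `β < 2 * γ`. -/
lemma IsFirmlyNonexpansive.isStronglyAttracting_isForwardBackwardStep
    (hJ : IsFirmlyNonexpansive J) (hF : IsCocoercive γ F) (hw : w ∈ stdSimplex ℝ ι)
    (hwi : 0 < w i) (hα₀ : 0 < α) (hα₁ : α < 2 * γ * w i) :
    IsStronglyAttracting w i (IsForwardBackwardStep J F w α i) := by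
  set β := α / w i with hβ
  have hβ₀ : 0 < β := div_pos hα₀ hwi
  have hβ₁ : 0 < 2 * γ / β - 1 := by
    rw [sub_pos, one_lt_div hβ₀, hβ, div_lt_iff₀ hwi]
    exact hα₁
  obtain ⟨c, hc, hc_le⟩ := exists_pos_mul_norm_add₃_sq_le (E := E) one_pos hwi (mul_pos hwi hβ₁)
  refine ⟨c, hc, fun y p z hp hz => ?_⟩
  set v := β • (F (y i) - F (z i)) with hv
  set u := ∑ j, w j • (y j - z j) - w i • v with hu
  have hinput : (∑ j, w j • y j - α • F (y i)) - (∑ j, w j • z j - α • F (z i)) = u := by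
    rw [hu, hv, smul_smul, hβ, mul_div_cancel₀ _ hwi.ne']
    simp only [smul_sub, Finset.sum_sub_distrib]
    abel
  have hfirm := hJ _ _ _ _ hp hz
  rw [hinput] at hfirm
  have hforward := norm_sum_smul_sub_smul_sq_add_le hw (fun j => y j - z j) i
    (hF.norm_sub_smul_sq_add_le hβ₀ (y i) (z i))
  have hmove := hc_le (u - (p - z i)) (y i - z i - v - u) v
  rw [show u - (p - z i) + (y i - z i - v - u) + v = y i - p by abel, norm_sub_rev] at hmove
  simp only [dist_eq_norm]
  linarith

lemma isClosed_isForwardBackwardStep (hJ : IsClosed {q : E × E | J q.1 q.2}) (hF : Continuous F) :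
    IsClosed {q : (ι → E) × E | IsForwardBackwardStep J F w α i q.1 q.2} :=
  hJ.preimage (f := fun q : (ι → E) × E => (∑ j, w j • q.1 j - α • F (q.1 i), q.2)) (by fun_prop)

end ForwardBackward

/-! ### Cocoercivity of gradients of smooth convex functions -/

section Smooth

variable {E : Type*} [NormedAddCommGroup E] [InnerProductSpace ℝ E] [CompleteSpace E] {f : E → ℝ}
  {f' : E → E}

lemma hasDerivAt_comp_lineMap (hf : ∀ x, HasGradientAt f (f' x) x) (x y : E) (t : ℝ) :
    HasDerivAt (fun t => f (AffineMap.lineMap x y t)) ⟪f' (AffineMap.lineMap x y t), y - x⟫ t :=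
  (hf _).hasFDerivAt.comp_hasDerivAt t AffineMap.hasDerivAt_lineMap

lemma add_inner_gradient_le_of_convexOn (hf : ∀ x, HasGradientAt f (f' x) x)
    (hconv : ConvexOn ℝ Set.univ f) (x y : E) : f x + ⟪f' x, y - x⟫ ≤ f y := by
  have hline : ConvexOn ℝ Set.univ (f ∘ AffineMap.lineMap (k := ℝ) x y) :=
    hconv.comp_affineMap (AffineMap.lineMap x y)
  have hslope := hline.le_slope_of_hasDerivAt (mem_univ 0) (mem_univ 1) one_pos
    (hasDerivAt_comp_lineMap hf x y 0)
  simp only [slope_def_field, Function.comp_apply, AffineMap.lineMap_apply_zero,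
    AffineMap.lineMap_apply_one, sub_zero, div_one] at hslope
  linarith

lemma le_add_inner_gradient_add_of_lipschitz (hf : ∀ x, HasGradientAt f (f' x) x) {L : ℝ}
    (hlip : ∀ x y, ‖f' x - f' y‖ ≤ L * ‖x - y‖) (x y : E) :
    f y ≤ f x + ⟪f' x, y - x⟫ + L / 2 * ‖y - x‖ ^ 2 := by
  set q : ℝ → ℝ := fun t => f x + t * ⟪f' x, y - x⟫ + L / 2 * t ^ 2 * ‖y - x‖ ^ 2
  have hq : ∀ t, HasDerivAt q (⟪f' x, y - x⟫ + L * t * ‖y - x‖ ^ 2) t := fun t => by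
    have hlin := ((hasDerivAt_id t).mul_const ⟪f' x, y - x⟫).const_add (f x)
    have hquad := ((hasDerivAt_pow 2 t).const_mul (L / 2)).mul_const (‖y - x‖ ^ 2)
    refine (hlin.add hquad).congr_deriv ?_
    push_cast
    ring
  have hderiv_le : ∀ t ∈ Ico (0 : ℝ) 1,
      ⟪f' (AffineMap.lineMap x y t), y - x⟫ ≤ ⟪f' x, y - x⟫ + L * t * ‖y - x‖ ^ 2 := by
    intro t ht
    have hgrad : ‖f' (AffineMap.lineMap x y t) - f' x‖ ≤ L * (t * ‖y - x‖) := by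
      refine (hlip _ _).trans_eq ?_
      rw [AffineMap.lineMap_apply_module', add_sub_cancel_right, norm_smul,
        Real.norm_of_nonneg ht.1]
    calc ⟪f' (AffineMap.lineMap x y t), y - x⟫
        = ⟪f' x, y - x⟫ + ⟪f' (AffineMap.lineMap x y t) - f' x, y - x⟫ := by
          rw [inner_sub_left]; ring
      _ ≤ ⟪f' x, y - x⟫ + L * (t * ‖y - x‖) * ‖y - x‖ := by
          gcongr
          exact (real_inner_le_norm _ _).trans (by gcongr)
      _ = ⟪f' x, y - x⟫ + L * t * ‖y - x‖ ^ 2 := by ring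
  have hle := image_le_of_deriv_right_le_deriv_boundary (a := 0) (b := 1)
    (fun t _ => (hasDerivAt_comp_lineMap hf x y t).continuousAt.continuousWithinAt)
    (fun t _ => (hasDerivAt_comp_lineMap hf x y t).hasDerivWithinAt) (by simp [q])
    (fun t _ => (hq t).continuousAt.continuousWithinAt) (fun t _ => (hq t).hasDerivWithinAt)
    hderiv_le (right_mem_Icc.2 zero_le_one)
  simpa [q] using hle

/-- Compares the two bounds at the point `y - L⁻¹ • (f' y - f' x)`, which minimizes the quadratic
upper bound at `y` of `f - ⟪f' x, ·⟫`. -/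
lemma add_inner_gradient_add_le_of_convexOn_of_lipschitz (hf : ∀ x, HasGradientAt f (f' x) x)
    (hconv : ConvexOn ℝ Set.univ f) {L : ℝ} (hL : 0 < L)
    (hlip : ∀ x y, ‖f' x - f' y‖ ≤ L * ‖x - y‖) (x y : E) :
    f x + ⟪f' x, y - x⟫ + 1 / (2 * L) * ‖f' y - f' x‖ ^ 2 ≤ f y := by
  set g := f' y - f' x with hg
  set z := y - L⁻¹ • g with hz
  have hlower := add_inner_gradient_le_of_convexOn hf hconv x z
  have hupper := le_add_inner_gradient_add_of_lipschitz hf hlip y z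
  have hlower_inner : ⟪f' x, z - x⟫ = ⟪f' x, y - x⟫ - L⁻¹ * ⟪f' x, g⟫ := by
    rw [show z - x = y - x - L⁻¹ • g by rw [hz]; abel, inner_sub_right, real_inner_smul_right]
  have hupper_inner : ⟪f' y, z - y⟫ = -(L⁻¹ * ⟪f' y, g⟫) := by
    rw [hz, sub_sub_cancel_left, inner_neg_right, real_inner_smul_right]
  have hnorm : L / 2 * ‖z - y‖ ^ 2 = 1 / (2 * L) * ‖g‖ ^ 2 := by
    rw [hz, sub_sub_cancel_left, norm_neg, norm_smul, Real.norm_of_nonneg (by positivity)]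
    field_simp
  have hdiff : L⁻¹ * ⟪f' y, g⟫ - L⁻¹ * ⟪f' x, g⟫ = 2 * (1 / (2 * L) * ‖g‖ ^ 2) := by
    rw [← mul_sub, ← inner_sub_left, ← hg, real_inner_self_eq_norm_sq]
    field_simp
  linarith

theorem isCocoercive_gradient_of_convexOn_of_lipschitz (hf : ∀ x, HasGradientAt f (f' x) x)
    (hconv : ConvexOn ℝ Set.univ f) {L : ℝ} (hL : 0 < L)
    (hlip : ∀ x y, ‖f' x - f' y‖ ≤ L * ‖x - y‖) : IsCocoercive (1 / L) f' := by
  intro x y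
  have hxy := add_inner_gradient_add_le_of_convexOn_of_lipschitz hf hconv hL hlip x y
  have hyx := add_inner_gradient_add_le_of_convexOn_of_lipschitz hf hconv hL hlip y x
  rw [norm_sub_rev] at hxy
  have hinner : ⟪x - y, f' x - f' y⟫ = -⟪f' x, y - x⟫ - ⟪f' y, x - y⟫ := by
    rw [real_inner_comm, inner_sub_left, ← inner_neg_right, neg_sub]
  have hhalf : 1 / L * ‖f' x - f' y‖ ^ 2 = 2 * (1 / (2 * L) * ‖f' x - f' y‖ ^ 2) := by
    field_simp
  linarith

end Smooth

/-! ### Proximal points -/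

lemma hasFDerivAt_inner_sub_right {E : Type*} [NormedAddCommGroup E] [InnerProductSpace ℝ E]
    (v u p : E) : HasFDerivAt (fun y => ⟪v, y - u⟫) (innerSL ℝ v) p := by
  simpa only [innerSL_apply_apply, inner_sub_right] using!
    (innerSL ℝ v).hasFDerivAt.sub_const ⟪v, u⟫

lemma hasFDerivAt_half_norm_sub_sq {E : Type*} [NormedAddCommGroup E] [InnerProductSpace ℝ E]
    (u p : E) : HasFDerivAt (fun y => 1 / 2 * ‖y - u‖ ^ 2) (innerSL ℝ (p - u)) p := by
  refine (((hasFDerivAt_id p).sub_const u).norm_sq.const_mul (1 / 2 : ℝ)).congr_fderiv ?_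
  ext v
  simp

namespace ProperClosedConvex

variable {d : ℕ} {h : EuclideanSpace ℝ (Fin d) → EReal} {α : ℝ} {u p y : EuclideanSpace ℝ (Fin d)}

lemma ne_bot (hh : ProperClosedConvex h) (y : EuclideanSpace ℝ (Fin d)) : h y ≠ ⊥ := hh.2.1 y

lemma toReal_le_of_le_coe (hh : ProperClosedConvex h) {r : ℝ} (hr : h y ≤ r) :
    (h y).toReal ≤ r := by
  lift h y to ℝ using ⟨ne_top_of_le_ne_top (EReal.coe_ne_top _) hr, hh.ne_bot y⟩ with s
  exact_mod_cast hr

lemma segment_le (hh : ProperClosedConvex h) (hp : h p ≠ ⊤) (hy : h y ≠ ⊤) {t : ℝ} (ht₀ : 0 ≤ t)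
    (ht₁ : t ≤ 1) :
    h (p + t • (y - p)) ≤ ((t * (h y).toReal + (1 - t) * (h p).toReal : ℝ) : EReal) := by
  have hconv := hh.2.2.2 y p t ht₀ ht₁
  rw [show t • y + (1 - t) • p = p + t • (y - p) by module,
    ← EReal.coe_toReal hp (hh.ne_bot p), ← EReal.coe_toReal hy (hh.ne_bot y)] at hconv
  exact_mod_cast hconv

lemma toReal_le_add_fderiv_of_isMin (hh : ProperClosedConvex h)
    {g : EuclideanSpace ℝ (Fin d) → ℝ} {g' : EuclideanSpace ℝ (Fin d) →L[ℝ] ℝ} (hα : 0 ≤ α)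
    (hg : HasFDerivAt g g' p) (hp : h p ≠ ⊤)
    (hmin : ∀ z, h z ≠ ⊤ → α * (h p).toReal + g p ≤ α * (h z).toReal + g z) (hy : h y ≠ ⊤) :
    α * (h p).toReal ≤ α * (h y).toReal + g' (y - p) := by
  have hslope : ∀ᶠ t in 𝓝[>] (0 : ℝ),
      α * (h p).toReal - α * (h y).toReal ≤ t⁻¹ • (g (p + t • (y - p)) - g p) := by
    filter_upwards [Ioc_mem_nhdsGT one_pos] with t ht
    have hseg := hh.segment_le hp hy ht.1.le ht.2
    have hseg_real := mul_le_mul_of_nonneg_left (hh.toReal_le_of_le_coe hseg) hα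
    have hopt := hmin _ (ne_top_of_le_ne_top (EReal.coe_ne_top _) hseg)
    rw [smul_eq_mul, inv_mul_eq_div, le_div_iff₀ ht.1]
    linarith
  linarith [ge_of_tendsto (hg.hasLineDerivAt (y - p)).tendsto_slope_zero_right hslope]

lemma isProxPt_iff (hh : ProperClosedConvex h) (hα : 0 < α) :
    IsProxPt α h u p ↔ h p ≠ ⊤ ∧ ∀ y, h y ≠ ⊤ →
      α * (h p).toReal + 1 / 2 * ‖p - u‖ ^ 2 ≤ α * (h y).toReal + 1 / 2 * ‖y - u‖ ^ 2 := by
  have hreal : ∀ y, h y ≠ ⊤ → (α : EReal) * h y + ((1 / 2 * ‖y - u‖ ^ 2 : ℝ) : EReal) =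
      ((α * (h y).toReal + 1 / 2 * ‖y - u‖ ^ 2 : ℝ) : EReal) := fun y hy => by
    rw [EReal.coe_add, EReal.coe_mul α, EReal.coe_toReal hy (hh.ne_bot y)]
  have htop : ∀ y, h y = ⊤ → (α : EReal) * h y + ((1 / 2 * ‖y - u‖ ^ 2 : ℝ) : EReal) = ⊤ :=
    fun y hy => by rw [hy, EReal.coe_mul_top_of_pos hα, EReal.top_add_coe]
  constructor
  · intro hprox
    have hp : h p ≠ ⊤ := fun hp => by
      obtain ⟨y, hy⟩ := hh.1
      have hle := hprox y
      rw [htop p hp, hreal y hy] at hle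
      exact EReal.coe_ne_top _ (top_le_iff.1 hle)
    exact ⟨hp, fun y hy => EReal.coe_le_coe_iff.1 (hreal p hp ▸ hreal y hy ▸ hprox y)⟩
  · rintro ⟨hp, hmin⟩ y
    by_cases hy : h y = ⊤
    · exact (htop y hy).symm ▸ le_top
    · rw [hreal p hp, hreal y hy]
      exact EReal.coe_le_coe_iff.2 (hmin y hy)

lemma isProxPt_iff_inner_le (hh : ProperClosedConvex h) (hα : 0 < α) :
    IsProxPt α h u p ↔ h p ≠ ⊤ ∧ ∀ y, h y ≠ ⊤ →
      α * (h p).toReal + ⟪u - p, y - p⟫ ≤ α * (h y).toReal := by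
  rw [hh.isProxPt_iff hα]
  refine and_congr_right fun hp => ⟨fun hmin y hy => ?_, fun hvar y hy => ?_⟩
  · have hfirst := hh.toReal_le_add_fderiv_of_isMin hα.le (hasFDerivAt_half_norm_sub_sq u p) hp
      hmin hy
    rw [innerSL_apply_apply, ← neg_sub u p, inner_neg_left] at hfirst
    linarith
  · have hexpand : ‖y - u‖ ^ 2 = ‖y - p‖ ^ 2 - 2 * ⟪u - p, y - p⟫ + ‖p - u‖ ^ 2 := by
      rw [← sub_sub_sub_cancel_right y u p, norm_sub_sq_real (y - p), norm_sub_rev u p,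
        real_inner_comm]
    linarith [hvar y hy, sq_nonneg ‖y - p‖]

lemma isFirmlyNonexpansive_isProxPt (hh : ProperClosedConvex h) (hα : 0 < α) :
    IsFirmlyNonexpansive (IsProxPt α h) := by
  intro u p v q hp hq
  obtain ⟨hp_top, hp_le⟩ := (hh.isProxPt_iff_inner_le hα).1 hp
  obtain ⟨hq_top, hq_le⟩ := (hh.isProxPt_iff_inner_le hα).1 hq
  have hmonotone : ⟪u - p, q - p⟫ + ⟪v - q, p - q⟫ ≤ 0 := by
    linarith [hp_le q hq_top, hq_le p hp_top]
  have hinner : ⟪u - p, q - p⟫ + ⟪v - q, p - q⟫ = ‖p - q‖ ^ 2 - ⟪u - v, p - q⟫ := by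
    rw [← real_inner_self_eq_norm_sq]
    simp only [inner_sub_left, inner_sub_right]
    ring
  rw [norm_sub_sq_real (u - v)]
  linarith

lemma isProxPt_iff_le_coe (hh : ProperClosedConvex h) (hα : 0 < α) :
    IsProxPt α h u p ↔ ∀ y, h y ≠ ⊤ →
      h p ≤ (((h y).toReal + (‖y - u‖ ^ 2 - ‖p - u‖ ^ 2) / (2 * α) : ℝ) : EReal) := by
  have hscale : ∀ (a b : ℝ) (y : EuclideanSpace ℝ (Fin d)),
      a ≤ b + (‖y - u‖ ^ 2 - ‖p - u‖ ^ 2) / (2 * α) ↔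
        α * a + 1 / 2 * ‖p - u‖ ^ 2 ≤ α * b + 1 / 2 * ‖y - u‖ ^ 2 := fun a b y => by
    rw [← sub_le_iff_le_add', le_div_iff₀ (by positivity)]
    constructor <;> intro hle <;> linarith
  rw [hh.isProxPt_iff hα]
  constructor
  · rintro ⟨hp, hmin⟩ y hy
    rw [← EReal.coe_toReal hp (hh.ne_bot p), EReal.coe_le_coe_iff]
    exact (hscale _ _ y).2 (hmin y hy)
  · intro hle
    obtain ⟨y, hy⟩ := hh.1
    exact ⟨ne_top_of_le_ne_top (EReal.coe_ne_top _) (hle y hy), fun z hz =>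
      (hscale _ _ z).1 (hh.toReal_le_of_le_coe (hle z hz))⟩

lemma isClosed_isProxPt (hh : ProperClosedConvex h) (hα : 0 < α) :
    IsClosed {q : EuclideanSpace ℝ (Fin d) × EuclideanSpace ℝ (Fin d) | IsProxPt α h q.1 q.2} := by
  simp only [hh.isProxPt_iff_le_coe hα, ofPred_forall]
  refine isClosed_iInter fun y => isClosed_iInter fun _ => ?_
  have hcont : Continuous fun q : EuclideanSpace ℝ (Fin d) × EuclideanSpace ℝ (Fin d) =>
      (q.2, (((h y).toReal + (‖y - q.1‖ ^ 2 - ‖q.2 - q.1‖ ^ 2) / (2 * α) : ℝ) : EReal)) :=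
    continuous_snd.prodMk (continuous_coe_real_ereal.comp (by fun_prop))
  exact hh.2.2.1.isClosed_epigraph.preimage hcont

end ProperClosedConvex

/-! ### Optimality in the penalized problem -/

/-- The quadratic form `⟨x, (I - 𝐖) x⟩` with `𝐖 = W ⊗ I`, which penalizes disagreement. -/
def consensusPenalty {ι E : Type*} [Fintype ι] [NormedAddCommGroup E] [InnerProductSpace ℝ E]
    (W : ι → ι → ℝ) (x : ι → E) : ℝ :=
  ∑ i, ⟪x i, x i - ∑ j, W i j • x j⟫

section Penalty

variable {ι E : Type*} [Fintype ι] [NormedAddCommGroup E] [InnerProductSpace ℝ E] {W : ι → ι → ℝ}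

lemma consensusPenalty_add (hW : ∀ i j, W i j = W j i) (x δ : ι → E) :
    consensusPenalty W (x + δ) = consensusPenalty W x
      + 2 * ∑ i, ⟪x i - ∑ j, W i j • x j, δ i⟫ + consensusPenalty W δ := by
  have hswap : ∑ i, ⟪x i, ∑ j, W i j • δ j⟫ = ∑ i, ⟪∑ j, W i j • x j, δ i⟫ := by
    simp only [inner_sum, sum_inner, real_inner_smul_left, real_inner_smul_right]
    rw [Finset.sum_comm]
    simp only [fun i j => hW j i]
  have hcomm : ∀ i (z : E), ⟪δ i, z⟫ = ⟪z, δ i⟫ := fun i z => real_inner_comm _ _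
  simp only [consensusPenalty, Pi.add_apply, smul_add, Finset.sum_add_distrib, inner_add_left,
    inner_sub_left, inner_sub_right, inner_add_right, Finset.sum_sub_distrib, hswap]
  simp only [hcomm]
  ring

lemma consensusPenalty_single [DecidableEq ι] (i : ι) (v : E) :
    consensusPenalty W (Pi.single i v) = (1 - W i i) * ‖v‖ ^ 2 := by
  have hoff : ∀ j, j ≠ i → ⟪(Pi.single i v : ι → E) j,
      (Pi.single i v : ι → E) j - ∑ m, W j m • (Pi.single i v : ι → E) m⟫ = 0 := fun j hj => by
    rw [Pi.single_eq_of_ne hj, inner_zero_left]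
  rw [consensusPenalty, Fintype.sum_eq_single i hoff,
    Fintype.sum_eq_single i fun m hm => by rw [Pi.single_eq_of_ne hm, smul_zero]]
  simp only [Pi.single_eq_same, inner_sub_right, real_inner_smul_right, real_inner_self_eq_norm_sq]
  ring

lemma consensusPenalty_update [DecidableEq ι] (hW : ∀ i j, W i j = W j i) (x : ι → E) (i : ι)
    (y : E) :
    consensusPenalty W (Function.update x i y) = consensusPenalty W x
      + 2 * ⟪x i - ∑ j, W i j • x j, y - x i⟫ + (1 - W i i) * ‖y - x i‖ ^ 2 := by
  have hupdate : Function.update x i y = x + Pi.single i (y - x i) := by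
    funext j
    rcases eq_or_ne j i with rfl | hj <;> simp [*]
  rw [hupdate, consensusPenalty_add hW, consensusPenalty_single,
    Fintype.sum_eq_single i fun j hj => by rw [Pi.single_eq_of_ne hj, inner_zero_right],
    Pi.single_eq_same]

end Penalty

section Optimality

variable {ι : Type*} [Fintype ι]

lemma sum_coe_add_eq_coe {a : ι → ℝ} {b : ι → EReal} (hbot : ∀ i, b i ≠ ⊥) (htop : ∀ i, b i ≠ ⊤) :
    ∑ i, ((a i : EReal) + b i) = ((∑ i, (a i + (b i).toReal) : ℝ) : EReal) := by
  have hcoe : ∀ c : ι → ℝ, ((∑ i, c i : ℝ) : EReal) = ∑ i, (c i : EReal) := fun c =>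
    map_sum (⟨⟨Real.toEReal, EReal.coe_zero⟩, EReal.coe_add⟩ : ℝ →+ EReal) c _
  rw [hcoe]
  exact Finset.sum_congr rfl fun i _ => by rw [EReal.coe_add, EReal.coe_toReal (htop i) (hbot i)]

lemma sum_coe_add_eq_top {a : ι → ℝ} {b : ι → EReal} (hbot : ∀ i, b i ≠ ⊥) {i : ι} (hi : b i = ⊤) :
    ∑ i, ((a i : EReal) + b i) = ⊤ := by
  classical
  have hrest : ∑ j ∈ Finset.univ.erase i, ((a j : EReal) + b j) ≠ ⊥ :=
    Finset.sum_induction _ (· ≠ ⊥) (fun _ _ hx hy => EReal.add_ne_bot_iff.2 ⟨hx, hy⟩)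
      EReal.zero_ne_bot fun j _ => EReal.add_ne_bot_iff.2 ⟨EReal.coe_ne_bot _, hbot j⟩
  rw [← Finset.add_sum_erase _ _ (Finset.mem_univ i), hi, EReal.coe_add_top,
    EReal.top_add_of_ne_bot hrest]

variable {d : ℕ} {W : ι → ι → ℝ} {f : ι → EuclideanSpace ℝ (Fin d) → ℝ}
  {h : ι → EuclideanSpace ℝ (Fin d) → EReal} {α : ℝ} {x : ι → EuclideanSpace ℝ (Fin d)}

/-- `x` solves the penalized problem `min ∑ i, (f i + h i) + (1 / (2 * α)) * ⟨·, (I - 𝐖) ·⟩`. -/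
def IsPenalizedMin (W : ι → ι → ℝ) (f : ι → EuclideanSpace ℝ (Fin d) → ℝ)
    (h : ι → EuclideanSpace ℝ (Fin d) → EReal) (α : ℝ) (x : ι → EuclideanSpace ℝ (Fin d)) : Prop :=
  ∀ y : ι → EuclideanSpace ℝ (Fin d),
    (∑ i, ((f i (x i) : EReal) + h i (x i))) + ((1 / (2 * α) * consensusPenalty W x : ℝ) : EReal)
      ≤ (∑ i, ((f i (y i) : EReal) + h i (y i)))
        + ((1 / (2 * α) * consensusPenalty W y : ℝ) : EReal)

namespace IsPenalizedMin

lemma ne_top (hx : IsPenalizedMin W f h α x) (hh : ∀ i, ProperClosedConvex (h i)) (i : ι) :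
    h i (x i) ≠ ⊤ := by
  intro htop
  choose y hy using fun i => (hh i).1
  have hle := hx y
  rw [sum_coe_add_eq_top (fun j => (hh j).ne_bot _) htop, EReal.top_add_coe,
    sum_coe_add_eq_coe (fun j => (hh j).ne_bot _) hy, ← EReal.coe_add, top_le_iff] at hle
  exact EReal.coe_ne_top _ hle

lemma le_update (hx : IsPenalizedMin W f h α x) (hh : ∀ i, ProperClosedConvex (h i))
    (hW : ∀ i j, W i j = W j i) (hα : 0 < α) (i : ι) {y : EuclideanSpace ℝ (Fin d)}
    (hy : h i y ≠ ⊤) :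
    α * (h i (x i)).toReal + α * f i (x i) ≤ α * (h i y).toReal
      + (α * f i y + ⟪x i - ∑ j, W i j • x j, y - x i⟫
        + (1 - W i i) * (1 / 2 * ‖y - x i‖ ^ 2)) := by
  classical
  have htop := hx.ne_top hh
  have htop_update : ∀ j, h j (Function.update x i y j) ≠ ⊤ := fun j => by
    rcases eq_or_ne j i with rfl | hj
    · rwa [Function.update_self]
    · rw [Function.update_of_ne hj]
      exact htop j
  have hle := hx (Function.update x i y)
  rw [sum_coe_add_eq_coe (fun j => (hh j).ne_bot _) htop,
    sum_coe_add_eq_coe (fun j => (hh j).ne_bot _) htop_update, ← EReal.coe_add, ← EReal.coe_add,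
    EReal.coe_le_coe_iff, sum_apply_update (fun j z => f j z + (h j z).toReal),
    consensusPenalty_update hW] at hle
  have hscaled := mul_le_mul_of_nonneg_left hle hα.le
  field_simp at hscaled
  linarith

lemma isProxPt (hx : IsPenalizedMin W f h α x) (hh : ∀ i, ProperClosedConvex (h i))
    (hW : ∀ i j, W i j = W j i) (hα : 0 < α) {i : ι} {g : EuclideanSpace ℝ (Fin d)}
    (hg : HasGradientAt (f i) g (x i)) :
    IsProxPt α (h i) ((∑ j, W i j • x j) - α • g) (x i) := by
  set N := x i - ∑ j, W i j • x j with hN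
  have hderiv : HasFDerivAt
      (fun y => α * f i y + ⟪N, y - x i⟫ + (1 - W i i) * (1 / 2 * ‖y - x i‖ ^ 2))
      (innerSL ℝ (α • g + N)) (x i) := by
    refine (((hg.hasFDerivAt.const_mul α).add (hasFDerivAt_inner_sub_right N (x i) (x i))).add
      ((hasFDerivAt_half_norm_sub_sq (x i) (x i)).const_mul (1 - W i i))).congr_fderiv ?_
    ext v
    simp
  refine ((hh i).isProxPt_iff_inner_le hα).2 ⟨hx.ne_top hh i, fun y hy => ?_⟩
  have hfirst := (hh i).toReal_le_add_fderiv_of_isMin hα.le hderiv (hx.ne_top hh i)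
    (fun z hz => by simpa using hx.le_update hh hW hα i hz) hy
  rw [show (∑ j, W i j • x j) - α • g - x i = -(α • g + N) by rw [hN]; abel, inner_neg_left]
  rw [innerSL_apply_apply] at hfirst
  linarith

end IsPenalizedMin

end Optimality

/-! ### Convergence of the asynchronous iteration -/

lemma reflTransGen_of_connected_fromRel {ι : Type*} {r : ι → ι → Prop} (hr : ∀ i j, r i j → r j i)
    (hconn : (SimpleGraph.fromRel r).Connected) (i j : ι) : Relation.ReflTransGen r i j := by
  have hadj : ∀ a b, (SimpleGraph.fromRel r).Adj a b → r a b := fun a b hab =>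
    ((SimpleGraph.fromRel_adj r a b).1 hab).2.elim id (hr b a)
  exact Relation.ReflTransGen.mono hadj _ _ ((SimpleGraph.reachable_iff_reflTransGen i j).1
    (hconn.preconnected i j))

theorem stmt12_general {ι E : Type*} [Fintype ι] [NormedAddCommGroup E] [InnerProductSpace ℝ E]
    [ProperSpace E] {W : ι → ι → ℝ} (hW : ∀ i, W i ∈ stdSimplex ℝ ι) (hdiag : ∀ i, 0 < W i i)
    (hconn : ∀ i j, Relation.ReflTransGen (fun i j => 0 < W i j) i j)
    {J : ι → E → E → Prop} (hJ : ∀ i, IsFirmlyNonexpansive (J i))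
    (hJclosed : ∀ i, IsClosed {q : E × E | J i q.1 q.2})
    {F : ι → E → E} {γ : ι → ℝ} (hF : ∀ i, IsCocoercive (γ i) (F i))
    {α : ℝ} (hα₀ : 0 < α) (hα₁ : ∀ i, α < 2 * γ i * W i i)
    (hfix : ∃ z : ι → E, ∀ i, IsForwardBackwardStep (J i) (F i) (W i) α i z (z i))
    {K : ι → Set ℕ} {s : ι → ι → ℕ → ℕ} {B D : ℕ} (hs : PartiallyAsynchronous K s B D)
    {x : ℕ → ι → E}
    (hx : IsAsyncOrbit (fun i => IsForwardBackwardStep (J i) (F i) (W i) α i) K s x) :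
    ∃ xstar : ι → E, (∀ i, IsForwardBackwardStep (J i) (F i) (W i) α i xstar (xstar i)) ∧
      Tendsto x atTop (𝓝 xstar) := by
  have hγ : ∀ i, 0 < γ i := fun i => by
    have := pos_of_mul_pos_left (hα₀.trans (hα₁ i)) (hdiag i).le
    linarith
  exact hx.exists_tendsto_fixed hs hW hdiag hconn
    (fun i => (hJ i).isStronglyAttracting_isForwardBackwardStep (hF i) (hW i) (hdiag i) hα₀ (hα₁ i))
    (fun i => isClosed_isForwardBackwardStep (hJclosed i) ((hF i).continuous (hγ i))) hfix

/-- **Theorem 2, asymptotic convergence under partial asynchrony.**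
For convex smooth `fᵢ`, proper closed convex `hᵢ`, the delay-free step-size condition,
a nonempty optimal set of the penalized problem, partial asynchrony with constants
`B, D`, and a connected communication graph, the asynchronous Prox-DGD iterates
converge to a fixed point of synchronous Prox-DGD. -/
theorem stmt12 (n d : ℕ) (hn : 0 < n)
    (W : Fin n → Fin n → ℝ)
    (hWsymm : ∀ i j, W i j = W j i)
    (hWnonneg : ∀ i j, 0 ≤ W i j)
    (hWstoch : ∀ i, ∑ j, W i j = 1)
    (hWdiag : ∀ i, 0 < W i i)
    (hconn : (SimpleGraph.fromRel fun i j : Fin n => 0 < W i j).Connected)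
    (f : Fin n → EuclideanSpace ℝ (Fin d) → ℝ)
    (f' : Fin n → EuclideanSpace ℝ (Fin d) → EuclideanSpace ℝ (Fin d))
    (hgrad : ∀ i x, HasGradientAt (f i) (f' i x) x)
    (hfconv : ∀ i, ConvexOn ℝ Set.univ (f i))
    (L : Fin n → ℝ) (hL : ∀ i, 0 < L i)
    (hlip : ∀ i x y, ‖f' i x - f' i y‖ ≤ L i * ‖x - y‖)
    (h : Fin n → EuclideanSpace ℝ (Fin d) → EReal)
    (hh : ∀ i, ProperClosedConvex (h i))
    (α : ℝ) (hα0 : 0 < α) (hα1 : ∀ i, α < 2 * (W i i / L i))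
    -- the penalized problem has an optimal solution
    (hpen : ∃ xopt : Fin n → EuclideanSpace ℝ (Fin d),
      ∀ x : Fin n → EuclideanSpace ℝ (Fin d),
        (∑ i, (((f i (xopt i) : ℝ) : EReal) + h i (xopt i)))
            + ((1 / (2 * α) * ∑ i, ⟪xopt i, xopt i - (∑ j, W i j • xopt j)⟫ : ℝ) : EReal)
          ≤ (∑ i, (((f i (x i) : ℝ) : EReal) + h i (x i)))
            + ((1 / (2 * α) * ∑ i, ⟪x i, x i - (∑ j, W i j • x j)⟫ : ℝ) : EReal))
    -- the asynchronous iterates, activation sets, and delayed indices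
    (x : ℕ → Fin n → EuclideanSpace ℝ (Fin d))
    (K : Fin n → Set ℕ)
    (s : Fin n → Fin n → ℕ → ℕ)
    (hs_le : ∀ i j k, s i j k ≤ k)
    (hs_self : ∀ i k, s i i k = k)
    -- the asynchronous Prox-DGD recursion
    (hupd : ∀ i k, k ∈ K i →
      IsProxPt α (h i) ((∑ j, W i j • x (s i j k) j) - α • f' i (x k i)) (x (k + 1) i))
    (hkeep : ∀ i k, k ∉ K i → x (k + 1) i = x k i)
    -- partial asynchrony with constants B and D
    (B D : ℕ)
    (hB : ∀ i k, ∃ l, k ≤ l ∧ l ≤ k + B ∧ l ∈ K i)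
    (hD : ∀ i j k, k ∈ K i → k - D ≤ s i j k) :
    ∃ xstar : Fin n → EuclideanSpace ℝ (Fin d),
      (∀ i, IsProxPt α (h i) ((∑ j, W i j • xstar j) - α • f' i (xstar i)) (xstar i)) ∧
      Tendsto x atTop (nhds xstar) := by
  obtain ⟨xopt, hopt⟩ : ∃ xopt, IsPenalizedMin W f h α xopt := hpen
  have hstep : ∀ i, α < 2 * (1 / L i) * W i i := fun i => by
    rw [mul_assoc, one_div_mul_eq_div]
    exact hα1 i
  have hasync : PartiallyAsynchronous K s B D :=
    ⟨hB, fun i j k _ => hs_le i j k, fun i j k hk => Nat.sub_le_iff_le_add.1 (hD i j k hk),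
      fun i k _ => hs_self i k⟩
  exact stmt12_general (fun i => ⟨hWnonneg i, hWstoch i⟩) hWdiag
    (reflTransGen_of_connected_fromRel (fun i j hij => hWsymm i j ▸ hij) hconn)
    (fun i => (hh i).isFirmlyNonexpansive_isProxPt hα0) (fun i => (hh i).isClosed_isProxPt hα0)
    (fun i => isCocoercive_gradient_of_convexOn_of_lipschitz (hgrad i) (hfconv i) (hL i) (hlip i))
    hα0 hstep ⟨xopt, fun i => hopt.isProxPt hh hWsymm hα0 (hgrad i (xopt i))⟩ hasync
    ⟨fun i k hk => by simpa only [IsForwardBackwardStep, hs_self] using hupd i k hk, hkeep⟩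
end
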